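/- arXiv:1408.3325 — 3 statements merged into one kernel-verified Lean document; each statement's English description precedes it below -/
import Mathlib

section
/- For every wheel W=(V,E_W) and every matching M=(V,E_M) on a common set V of n ≥ 4 vertices, there exists a RacSim drawing of W and M on an integer grid of size (⌊3n/2⌋−1)×(n+2) in which every edge of the wheel is drawn with at most two bends and every edge of the matching is drawn with no bends (as a single straight-line segment). -/
open SimpleGraph

/-- A polyline with `n` straight-line segments, given by its `n + 1` corner points. -/
structure Polyline where
  n : ℕ
  pts : Fin (n + 1) → ℝ × ℝ

namespace Polyline

/-- The first point of a polyline. -/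
def first (P : Polyline) : ℝ × ℝ := P.pts 0

/-- The last point of a polyline. -/
def last (P : Polyline) : ℝ × ℝ := P.pts (Fin.last P.n)

/-- The segments of a polyline, as ordered pairs of endpoints. -/
def segs (P : Polyline) : Set ((ℝ × ℝ) × (ℝ × ℝ)) :=
  {s | ∃ i : Fin P.n, s = (P.pts i.castSucc, P.pts i.succ)}

/-- The set of points covered by a polyline. -/
def curve (P : Polyline) : Set (ℝ × ℝ) :=
  ⋃ i : Fin P.n, segment ℝ (P.pts i.castSucc) (P.pts i.succ)

end Polyline

/-- Two segments are perpendicular: their direction vectors have zero dot product. -/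
def SegPerp (s t : (ℝ × ℝ) × (ℝ × ℝ)) : Prop :=
  (s.2.1 - s.1.1) * (t.2.1 - t.1.1) + (s.2.2 - s.1.2) * (t.2.2 - t.1.2) = 0

/-- Two segments cross: their relative interiors meet. -/
def SegCross (s t : (ℝ × ℝ) × (ℝ × ℝ)) : Prop :=
  (openSegment ℝ s.1 s.2 ∩ openSegment ℝ t.1 t.2).Nonempty

/-- A point has integer coordinates lying in `{1, …, a} × {1, …, b}`. -/
def OnGridPt (a b : ℤ) (p : ℝ × ℝ) : Prop :=
  ∃ x y : ℤ, p = ((x : ℝ), (y : ℝ)) ∧ 1 ≤ x ∧ x ≤ a ∧ 1 ≤ y ∧ y ≤ b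

/-- A simultaneous polyline drawing of the graphs `G 0, …, G (m - 1)` on a common
vertex set `V`: an injective placement of the vertices in the plane together with,
for each graph and each of its edges, a polyline joining the placements of the two
endpoints of the edge. -/
structure SimDrawing {V : Type} {m : ℕ} (G : Fin m → SimpleGraph V) where
  pos : V → ℝ × ℝ
  pos_injective : Function.Injective pos
  poly : Fin m → Sym2 V → Polyline
  joins : ∀ (i : Fin m) (a b : V), (G i).Adj a b →
    ((poly i s(a, b)).first = pos a ∧ (poly i s(a, b)).last = pos b) ∨
    ((poly i s(a, b)).first = pos b ∧ (poly i s(a, b)).last = pos a)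

namespace SimDrawing

variable {V : Type} {m : ℕ} {G : Fin m → SimpleGraph V} (D : SimDrawing G)

/-- (i) Each graph is drawn planar: the polylines of two distinct edges of the same
graph intersect only in points representing common endpoints. -/
def PlanarEach : Prop :=
  ∀ i : Fin m, ∀ e ∈ (G i).edgeSet, ∀ e' ∈ (G i).edgeSet, e ≠ e' →
    (D.poly i e).curve ∩ (D.poly i e').curve ⊆
      {p | ∃ v : V, v ∈ e ∧ v ∈ e' ∧ p = D.pos v}

/-- (ii) No two segments belonging to distinct edges overlap in more than one point. -/
def NoOverlaps : Prop :=
  ∀ i : Fin m, ∀ e ∈ (G i).edgeSet, ∀ j : Fin m, ∀ e' ∈ (G j).edgeSet,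
    (i ≠ j ∨ e ≠ e') →
      ∀ s ∈ (D.poly i e).segs, ∀ t ∈ (D.poly j e').segs,
        (segment ℝ s.1 s.2 ∩ segment ℝ t.1 t.2).Subsingleton

/-- (iii) Whenever segments of edges of two different graphs cross, they are
perpendicular at the crossing point. -/
def RightAngleCrossings : Prop :=
  ∀ i j : Fin m, i ≠ j → ∀ e ∈ (G i).edgeSet, ∀ e' ∈ (G j).edgeSet,
    ∀ s ∈ (D.poly i e).segs, ∀ t ∈ (D.poly j e').segs, SegCross s t → SegPerp s t

/-- A RacSim (RAC simultaneous) drawing: conditions (i), (ii) and (iii). -/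
def IsRacSim : Prop :=
  D.PlanarEach ∧ D.NoOverlaps ∧ D.RightAngleCrossings

/-- All vertex points and all corner points (hence all segment endpoints) of the
drawing lie on the integer grid `{1, …, a} × {1, …, b}`. -/
def OnGrid (a b : ℤ) : Prop :=
  (∀ v : V, OnGridPt a b (D.pos v)) ∧
    ∀ i : Fin m, ∀ e ∈ (G i).edgeSet, ∀ k : Fin ((D.poly i e).n + 1),
      OnGridPt a b ((D.poly i e).pts k)

/-- Every edge of the `i`-th graph is drawn with at most `k` bends, i.e. its
polyline consists of at most `k + 1` segments. -/
def BendsAtMost (i : Fin m) (k : ℕ) : Prop :=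
  ∀ e ∈ (G i).edgeSet, (D.poly i e).n ≤ k + 1

end SimDrawing

/-- The degree of a vertex of a graph. -/
noncomputable def vdeg {V : Type} (G : SimpleGraph V) (v : V) : ℕ := (G.neighborSet v).ncard

/-- Rim adjacency for a wheel on indices `1, …, n - 1` (index `0` is the center):
consecutive indices, or the wrap-around pair `{1, n - 1}`. -/
def RimAdj (n : ℕ) (a b : Fin n) : Prop :=
  (b.val = a.val + 1 ∨ a.val = b.val + 1) ∨
    (a.val = 1 ∧ b.val = n - 1) ∨ (b.val = 1 ∧ a.val = n - 1)

/-- `W` is a wheel on `n` vertices: under some labeling of the vertices by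
`Fin n`, vertex `0` is the center, adjacent to all other vertices, and the
remaining vertices form the rim cycle `1 → 2 → ⋯ → (n-1) → 1`. -/
def IsWheel {V : Type} (n : ℕ) (W : SimpleGraph V) : Prop :=
  ∃ f : Fin n ≃ V, ∀ a b : Fin n,
    W.Adj (f a) (f b) ↔
      (a.val = 0 ∧ b.val ≠ 0) ∨ (b.val = 0 ∧ a.val ≠ 0) ∨
      (a.val ≠ 0 ∧ b.val ≠ 0 ∧ RimAdj n a b)

/-- A matching on a vertex set: a graph in which every vertex has degree at most 1. -/
def IsMatchingGraph {V : Type} (M : SimpleGraph V) : Prop :=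
  ∀ v : V, vdeg M v ≤ 1


/-! ### Polylines with two or three segments -/

/-- The straight segment as a polyline. -/
def poly1 (p q : ℝ × ℝ) : Polyline := ⟨1, ![p, q]⟩

/-- The two-segment polyline. -/
def poly2 (p q r : ℝ × ℝ) : Polyline := ⟨2, ![p, q, r]⟩

/-- The three-segment polyline. -/
def poly3 (p q r s : ℝ × ℝ) : Polyline := ⟨3, ![p, q, r, s]⟩

lemma mem_segs_poly1 {p q : ℝ × ℝ} {t} (h : t ∈ (poly1 p q).segs) : t = (p, q) := by
  obtain ⟨i, rfl⟩ := h
  change Fin 1 at i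
  fin_cases i
  rfl

lemma mem_segs_poly2 {p q r : ℝ × ℝ} {t} (h : t ∈ (poly2 p q r).segs) :
    t = (p, q) ∨ t = (q, r) := by
  obtain ⟨i, rfl⟩ := h
  change Fin 2 at i
  fin_cases i
  · left; rfl
  · right; rfl

lemma mem_segs_poly3 {p q r s : ℝ × ℝ} {t} (h : t ∈ (poly3 p q r s).segs) :
    t = (p, q) ∨ t = (q, r) ∨ t = (r, s) := by
  obtain ⟨i, rfl⟩ := h
  change Fin 3 at i
  fin_cases i
  · left; rfl
  · right; left; rfl
  · right; right; rfl

lemma mem_curve {Q : Polyline} {z} (h : z ∈ Q.curve) :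
    ∃ t ∈ Q.segs, z ∈ segment ℝ t.1 t.2 := by
  simp only [Polyline.curve, Set.mem_iUnion] at h
  obtain ⟨i, hi⟩ := h
  exact ⟨_, ⟨i, rfl⟩, hi⟩

lemma seg_subset_curve {Q : Polyline} {t} (h : t ∈ Q.segs) :
    segment ℝ t.1 t.2 ⊆ Q.curve := by
  obtain ⟨i, rfl⟩ := h
  intro z hz
  simp only [Polyline.curve, Set.mem_iUnion]
  exact ⟨i, hz⟩

lemma mem_seg {p q z : ℝ × ℝ} (h : z ∈ segment ℝ p q) :
    ∃ t : ℝ, 0 ≤ t ∧ t ≤ 1 ∧ z.1 = p.1 + t * (q.1 - p.1) ∧ z.2 = p.2 + t * (q.2 - p.2) := by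
  obtain ⟨a, b, ha, hb, hab, rfl⟩ := h
  have ha' : a = 1 - b := by linarith
  subst ha'
  refine ⟨b, hb, by linarith, ?_, ?_⟩ <;> simp <;> ring

lemma mem_oseg {p q z : ℝ × ℝ} (h : z ∈ openSegment ℝ p q) :
    ∃ t : ℝ, 0 < t ∧ t < 1 ∧ z.1 = p.1 + t * (q.1 - p.1) ∧ z.2 = p.2 + t * (q.2 - p.2) := by
  obtain ⟨a, b, ha, hb, hab, rfl⟩ := h
  have ha' : a = 1 - b := by linarith
  subst ha'
  refine ⟨b, hb, by linarith, ?_, ?_⟩ <;> simp <;> ring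

/-! ### The abstract configuration -/

/-- Coordinates of the drawing: `x i`, `y i` for rim vertex `i` (`1 ≤ i ≤ m`), `c j` the column
used by the rim edge `j, j+1`, and `H` the row of the center. -/
structure Cfg (m : ℕ) (x y c : ℕ → ℝ) (H : ℝ) : Prop where
  hm : 3 ≤ m
  x1 : x 1 = 1
  x3 : ∀ i, 2 ≤ i → i ≤ m → 3 ≤ x i
  mono : ∀ i j, 1 ≤ i → i < j → j ≤ m → x i + 1 ≤ x j
  cl : ∀ j, 1 ≤ j → j < m → c j = x j ∨ c j = x j + 1
  cr : ∀ j, 1 ≤ j → j < m → c j = x (j + 1) ∨ c j = x (j + 1) - 1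
  c1 : c 1 ≠ x 1
  cc : ∀ j, 1 ≤ j → j + 1 < m → ¬ (c j = x (j + 1) ∧ c (j + 1) = x (j + 1))
  cm : ∀ j, 1 ≤ j → j + 1 = m → c j ≠ x (j + 1)
  cD : ∀ j, 1 ≤ j → j < m → c j = x j → y (j + 1) ≤ y j
  cU : ∀ j, 1 ≤ j → j < m → c j = x (j + 1) → y j + 1 ≤ y (j + 1)
  c2 : ∀ j, 1 ≤ j → j < m → 2 ≤ c j
  y1l : H - 2 ≤ y 1
  y1u : y 1 ≤ H - 1
  yl : ∀ i, 1 ≤ i → i ≤ m → 3 ≤ y i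
  yu : ∀ i, 2 ≤ i → i ≤ m → y i ≤ H - 2
  yint : ∀ i j, 1 ≤ i → i ≤ m → 1 ≤ j → j ≤ m → y i = y j ∨ y i + 1 ≤ y j ∨ y j + 1 ≤ y i

/-- Vertex positions. -/
noncomputable def vpos (x y : ℕ → ℝ) (H : ℝ) (i : ℕ) : ℝ × ℝ :=
  if i = 0 then (2, H) else (x i, y i)

/-- The polyline of the wheel edge with indices `a < b`. -/
noncomputable def wpoly (x y c : ℕ → ℝ) (H : ℝ) (a b : ℕ) : Polyline :=
  if a = 0 then
    (if b = 1 then poly2 (2, H) (1, H) (x b, y b) else poly2 (2, H) (x b, H - 1) (x b, y b))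
  else if b = a + 1 then poly3 (x a, y a) (c a, y a - 1) (c a, y b - 1) (x b, y b)
  else poly3 (x a, y a) (x a, 1) (x b, 1) (x b, y b)

/-- Index pairs of wheel edges. -/
def WE (m a b : ℕ) : Prop :=
  (a = 0 ∧ 1 ≤ b ∧ b ≤ m) ∨ (1 ≤ a ∧ b = a + 1 ∧ b ≤ m) ∨ (a = 1 ∧ b = m)

/-- Points covered by the spoke to rim vertex `i`. -/
def SpokeReg (x y : ℕ → ℝ) (H : ℝ) (i : ℕ) (X Y : ℝ) : Prop :=
  (i = 1 ∧ ((Y = H ∧ 1 ≤ X ∧ X ≤ 2) ∨ (X = 1 ∧ y 1 ≤ Y ∧ Y ≤ H))) ∨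
  (2 ≤ i ∧ ((∃ t, 0 ≤ t ∧ t ≤ 1 ∧ X = 2 + t * (x i - 2) ∧ Y = H - t) ∨
    (X = x i ∧ y i ≤ Y ∧ Y ≤ H - 1)))

/-- A region containing the rim edge `j, j+1`. -/
def RimReg (x y c : ℕ → ℝ) (H : ℝ) (j : ℕ) (X Y : ℝ) : Prop :=
  x j ≤ X ∧ X ≤ x (j + 1) ∧ 2 ≤ Y ∧ Y ≤ H - 1 ∧
  (X = x j → Y ≤ y j ∧ (c j ≠ x j → Y = y j)) ∧
  (X = x (j + 1) → Y ≤ y (j + 1) ∧ (c j ≠ x (j + 1) → Y = y (j + 1)))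

/-- A region containing the edge closing the rim. -/
def CloseReg (x y : ℕ → ℝ) (m : ℕ) (X Y : ℝ) : Prop :=
  (X = 1 ∧ Y ≤ y 1) ∨ Y = 1 ∨ (X = x m ∧ Y ≤ y m)

section
variable {m : ℕ} {x y c : ℕ → ℝ} {H : ℝ}

lemma Cfg.yH (C : Cfg m x y c H) {i : ℕ} (h1 : 1 ≤ i) (h2 : i ≤ m) : y i ≤ H - 1 := by
  rcases Nat.lt_or_ge 1 i with h | h
  · have := C.yu i h h2; linarith
  · obtain rfl : i = 1 := by omega
    exact C.y1u

lemma spoke_reg (C : Cfg m x y c H) {b : ℕ} (h1 : 1 ≤ b) (h2 : b ≤ m) {z : ℝ × ℝ}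
    (hz : z ∈ (wpoly x y c H 0 b).curve) : SpokeReg x y H b z.1 z.2 := by
  obtain ⟨s, hs, hz⟩ := mem_curve hz
  have x1 := C.x1
  have y1u := C.y1u
  by_cases hb : b = 1
  · subst hb
    simp only [wpoly, if_true] at hs
    left
    refine ⟨rfl, ?_⟩
    rcases mem_segs_poly2 hs with rfl | rfl
    · obtain ⟨t, t0, t1, e1, e2⟩ := mem_seg hz
      simp only at e1 e2
      left
      refine ⟨?_, ?_, ?_⟩ <;> linarith
    · obtain ⟨t, t0, t1, e1, e2⟩ := mem_seg hz
      simp only [x1] at e1 e2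
      right
      refine ⟨?_, ?_, ?_⟩
      · linarith
      · nlinarith
      · nlinarith
  · simp only [wpoly, if_true, if_neg hb] at hs
    right
    have hb2 : 2 ≤ b := by omega
    refine ⟨hb2, ?_⟩
    have := C.yu b hb2 h2
    rcases mem_segs_poly2 hs with rfl | rfl
    · obtain ⟨t, t0, t1, e1, e2⟩ := mem_seg hz
      simp only at e1 e2
      left
      exact ⟨t, t0, t1, e1, by linarith⟩
    · obtain ⟨t, t0, t1, e1, e2⟩ := mem_seg hz
      simp only at e1 e2
      right
      refine ⟨?_, ?_, ?_⟩
      · linarith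
      · nlinarith
      · nlinarith

lemma rim_reg (C : Cfg m x y c H) {j : ℕ} (h1 : 1 ≤ j) (h2 : j + 1 ≤ m) {z : ℝ × ℝ}
    (hz : z ∈ (wpoly x y c H j (j + 1)).curve) : RimReg x y c H j z.1 z.2 := by
  obtain ⟨s, hs, hz⟩ := mem_curve hz
  have hj : j ≠ 0 := by omega
  simp only [wpoly, if_neg hj, if_true] at hs
  have a1 := C.cl j h1 h2
  have a2 := C.cr j h1 h2
  have a3 := C.mono j (j + 1) h1 (by omega) h2
  have a4 := C.yl j h1 (by omega)
  have a5 := C.yl (j + 1) (by omega) h2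
  have a6 := C.yH h1 (by omega : j ≤ m)
  have a7 := C.yH (by omega : 1 ≤ j + 1) h2
  have a8 := C.yint j (j + 1) h1 (by omega) (by omega) h2
  have a9 := C.cD j h1 h2
  have a10 := C.cU j h1 h2
  unfold RimReg
  rcases mem_segs_poly3 hs with rfl | rfl | rfl
  all_goals
    obtain ⟨t, t0, t1, e1, e2⟩ := mem_seg hz
    simp only at e1 e2
    generalize z.1 = X at *
    generalize z.2 = Y at *
  · have e2' : Y = y j - t := by linarith
    have key : (c j = x j ∧ X = x j) ∨ (c j = x j + 1 ∧ X = x j + t) := by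
      rcases a1 with h | h
      · left; rw [h] at e1; exact ⟨h, by linarith⟩
      · right; rw [h] at e1; exact ⟨h, by linarith⟩
    clear e1 e2 hz hs
    refine ⟨?_, ?_, ?_, ?_, fun hX => ⟨?_, fun hc => ?_⟩, fun hX => ⟨?_, fun hc => ?_⟩⟩ <;>
      grind
  · rw [sub_self, mul_zero, add_zero] at e1
    have u1 : Y ≤ y j - 1 ∨ Y ≤ y (j + 1) - 1 := by
      rcases le_total (y j) (y (j + 1)) with h | h
      · right; nlinarith
      · left; nlinarith
    have u2 : y j - 1 ≤ Y ∨ y (j + 1) - 1 ≤ Y := by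
      rcases le_total (y j) (y (j + 1)) with h | h
      · left; nlinarith
      · right; nlinarith
    clear e2 hz hs
    refine ⟨?_, ?_, ?_, ?_, fun hX => ⟨?_, fun hc => ?_⟩, fun hX => ⟨?_, fun hc => ?_⟩⟩ <;>
      grind
  · have e2' : Y = y (j + 1) - 1 + t := by linarith
    have key : (c j = x (j + 1) ∧ X = x (j + 1)) ∨
        (c j = x (j + 1) - 1 ∧ X = x (j + 1) - 1 + t) := by
      rcases a2 with h | h
      · left; rw [h] at e1; exact ⟨h, by linarith⟩
      · right; rw [h] at e1; exact ⟨h, by linarith⟩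
    clear e1 e2 hz hs
    refine ⟨?_, ?_, ?_, ?_, fun hX => ⟨?_, fun hc => ?_⟩, fun hX => ⟨?_, fun hc => ?_⟩⟩ <;>
      grind

lemma close_reg (C : Cfg m x y c H) {z : ℝ × ℝ}
    (hz : z ∈ (wpoly x y c H 1 m).curve) : CloseReg x y m z.1 z.2 := by
  obtain ⟨s, hs, hz⟩ := mem_curve hz
  have hm := C.hm
  have hj : m ≠ 1 + 1 := by omega
  simp only [wpoly, if_neg hj, one_ne_zero, if_false] at hs
  have a4 := C.yl 1 le_rfl (by omega)
  have a5 := C.yl m (by omega) le_rfl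
  have x1 := C.x1
  unfold CloseReg
  rcases mem_segs_poly3 hs with rfl | rfl | rfl
  all_goals
    obtain ⟨t, t0, t1, e1, e2⟩ := mem_seg hz
    simp only at e1 e2
  · left; constructor
    · linarith
    · nlinarith
  · right; left; linarith
  · right; right; constructor
    · linarith
    · nlinarith

lemma spoke_spoke (C : Cfg m x y c H) {i j : ℕ} (hi : 1 ≤ i) (hij : i < j) (hj : j ≤ m)
    {X Y : ℝ} (h : SpokeReg x y H i X Y) (h' : SpokeReg x y H j X Y) : X = 2 ∧ Y = H := by
  have a1 := C.mono i j hi hij hj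
  have a2 := C.x3 j (by omega) hj
  have y1l := C.y1l
  rcases h' with ⟨rfl, -⟩ | ⟨-, h'⟩
  · omega
  rcases h with ⟨rfl, h⟩ | ⟨hi2, h⟩
  · rcases h' with ⟨t, t0, t1, rfl, rfl⟩ | ⟨rfl, h1, h2⟩
    · rcases h with ⟨h3, h4, h5⟩ | ⟨h3, h4, h5⟩
      · have : t = 0 := by linarith
        subst this; simp
      · nlinarith
    · exfalso; rcases h with ⟨h3, h4, h5⟩ | ⟨h3, h4, h5⟩ <;> linarith
  · have a3 := C.x3 i hi2 (by omega)
    rcases h' with ⟨t, t0, t1, rfl, rfl⟩ | ⟨rfl, h1, h2⟩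
    · rcases h with ⟨s, s0, s1, h3, h4⟩ | ⟨h3, h4, h5⟩
      · have : s = t := by linarith
        subst this
        have : s * (x j - x i) = 0 := by linarith
        rcases mul_eq_zero.1 this with h | h
        · subst h; simp
        · linarith
      · have : t = 1 := by linarith
        subst this; linarith
    · rcases h with ⟨s, s0, s1, h3, h4⟩ | ⟨h3, h4, h5⟩
      · have : s = 1 := by linarith
        subst this; linarith
      · linarith

lemma rim_col (C : Cfg m x y c H) {i j : ℕ} (hi : 1 ≤ i) (him : i ≤ m) (hj : 1 ≤ j)
    (hjm : j + 1 ≤ m) {Y : ℝ} (h : RimReg x y c H j (x i) Y) :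
    (i = j ∨ i = j + 1) ∧ Y ≤ y i := by
  obtain ⟨h1, h2, h3, h4, h5, h6⟩ := h
  have : i = j ∨ i = j + 1 := by
    rcases Nat.lt_or_ge i j with h | h
    · have := C.mono i j hi h (by omega); linarith
    · rcases Nat.lt_or_ge (j + 1) i with h | h
      · have := C.mono (j + 1) i (by omega) h him; linarith
      · omega
  refine ⟨this, ?_⟩
  rcases this with rfl | rfl
  · exact (h5 rfl).1
  · exact (h6 rfl).1

lemma spoke_rim (C : Cfg m x y c H) {i j : ℕ} (hi : 1 ≤ i) (him : i ≤ m) (hj : 1 ≤ j)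
    (hjm : j + 1 ≤ m) {X Y : ℝ} (h : SpokeReg x y H i X Y) (h' : RimReg x y c H j X Y) :
    (i = j ∨ i = j + 1) ∧ X = x i ∧ Y = y i := by
  have x1 := C.x1
  have hY := h'.2.2.2.1
  rcases h with ⟨rfl, ⟨h1, h2, h3⟩ | ⟨h1, h2, h3⟩⟩ | ⟨hi2, ⟨t, t0, t1, h1, h2⟩ | ⟨h1, h2, h3⟩⟩
  · linarith
  · rw [← x1] at h1
    rw [h1] at h'
    have := rim_col C hi him hj hjm h'
    exact ⟨this.1, h1, by linarith [this.2]⟩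
  · have ht : t = 1 := by linarith
    subst ht
    have h1 : X = x i := by linarith
    rw [h1] at h'
    have := rim_col C hi him hj hjm h'
    have := C.yu i hi2 him
    linarith
  · rw [h1] at h'
    have := rim_col C hi him hj hjm h'
    exact ⟨this.1, h1, by linarith [this.2]⟩

lemma spoke_close (C : Cfg m x y c H) {i : ℕ} (hi : 1 ≤ i) (him : i ≤ m)
    {X Y : ℝ} (h : SpokeReg x y H i X Y) (h' : CloseReg x y m X Y) :
    (i = 1 ∨ i = m) ∧ X = x i ∧ Y = y i := by
  have x1 := C.x1
  have y1u := C.y1u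
  have y1l := C.y1l
  have hm := C.hm
  have ym := C.yu m (by omega) le_rfl
  have ym3 := C.yl m (by omega) le_rfl
  have xm := C.x3 m (by omega) le_rfl
  have yi := C.yl i hi him
  rcases h with ⟨rfl, h⟩ | ⟨hi2, h⟩
  · rcases h with ⟨h1, h2, h3⟩ | ⟨h1, h2, h3⟩ <;> rcases h' with ⟨g1, g2⟩ | g1 | ⟨g1, g2⟩
    all_goals first
      | (exfalso; linarith)
      | exact ⟨Or.inl rfl, by linarith, by linarith⟩
  · have yu := C.yu i hi2 him
    have xi := C.x3 i hi2 him
    rcases h with ⟨t, t0, t1, h1, h2⟩ | ⟨h1, h2, h3⟩ <;> rcases h' with ⟨g1, g2⟩ | g1 | ⟨g1, g2⟩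
    · nlinarith
    · linarith
    · linarith
    · linarith
    · linarith
    · rcases Nat.lt_or_ge i m with h | h
      · have := C.mono i m hi h le_rfl
        linarith
      · obtain rfl : i = m := by omega
        exact ⟨Or.inr rfl, h1, by linarith⟩

lemma rim_rim (C : Cfg m x y c H) {i j : ℕ} (hi : 1 ≤ i) (hij : i < j) (hjm : j + 1 ≤ m)
    {X Y : ℝ} (h : RimReg x y c H i X Y) (h' : RimReg x y c H j X Y) :
    j = i + 1 ∧ X = x j ∧ Y = y j := by
  obtain ⟨h1, h2, h3, h4, h5, h6⟩ := h
  obtain ⟨g1, g2, g3, g4, g5, g6⟩ := h'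
  rcases Nat.lt_or_ge (i + 1) j with h | h
  · have := C.mono (i + 1) j (by omega) h (by omega)
    linarith
  · obtain rfl : j = i + 1 := by omega
    have hX : X = x (i + 1) := le_antisymm h2 g1
    refine ⟨rfl, hX, ?_⟩
    have := C.cc i hi (by omega)
    by_cases hc : c i = x (i + 1)
    · exact (g5 hX).2 fun h => this ⟨hc, h⟩
    · exact (h6 hX).2 hc

lemma rim_close (C : Cfg m x y c H) {j : ℕ} (hj : 1 ≤ j) (hjm : j + 1 ≤ m)
    {X Y : ℝ} (h : RimReg x y c H j X Y) (h' : CloseReg x y m X Y) :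
    (j = 1 ∧ X = x j ∧ Y = y j) ∨ (j + 1 = m ∧ X = x m ∧ Y = y m) := by
  have x1 := C.x1
  have hm := C.hm
  rcases h' with ⟨g1, g2⟩ | g1 | ⟨g1, g2⟩
  · rw [← x1] at g1
    subst g1
    have := (rim_col C le_rfl (by omega) hj hjm h).1
    obtain rfl : j = 1 := by omega
    exact Or.inl ⟨rfl, rfl, (h.2.2.2.2.1 rfl).2 C.c1⟩
  · have := h.2.2.1
    linarith
  · subst g1
    have := (rim_col C (by omega) le_rfl hj hjm h).1
    obtain rfl : m = j + 1 := by omega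
    exact Or.inr ⟨rfl, rfl, (h.2.2.2.2.2 rfl).2 (C.cm j hj rfl)⟩

lemma vpos_pos {i : ℕ} (h : 1 ≤ i) : vpos x y H i = (x i, y i) := by
  simp [vpos, show i ≠ 0 by omega]

lemma vpos_zero : vpos x y H 0 = (2, H) := by simp [vpos]

/-- Planarity of the wheel. -/
lemma planar_wheel (C : Cfg m x y c H) {a b a' b' : ℕ} (h : WE m a b) (h' : WE m a' b')
    (hne : ¬ (a = a' ∧ b = b')) {z : ℝ × ℝ} (hz : z ∈ (wpoly x y c H a b).curve)
    (hz' : z ∈ (wpoly x y c H a' b').curve) :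
    ∃ i, (i = a ∨ i = b) ∧ (i = a' ∨ i = b') ∧ z = vpos x y H i := by
  have hm := C.hm
  rcases h with ⟨rfl, h1, h2⟩ | ⟨h1, rfl, h2⟩ | ⟨rfl, rfl⟩ <;>
    rcases h' with ⟨rfl, g1, g2⟩ | ⟨g1, rfl, g2⟩ | ⟨rfl, rfl⟩
  · refine ⟨0, Or.inl rfl, Or.inl rfl, ?_⟩
    rw [vpos_zero]
    rcases Nat.lt_or_ge b b' with h | h
    · have := spoke_spoke C h1 h g2 (spoke_reg C h1 h2 hz) (spoke_reg C g1 g2 hz')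
      exact Prod.ext this.1 this.2
    · have := spoke_spoke C g1 (by omega) h2 (spoke_reg C g1 g2 hz') (spoke_reg C h1 h2 hz)
      exact Prod.ext this.1 this.2
  · have := spoke_rim C h1 h2 g1 g2 (spoke_reg C h1 h2 hz) (rim_reg C g1 g2 hz')
    exact ⟨b, Or.inr rfl, this.1, by rw [vpos_pos h1]; exact Prod.ext this.2.1 this.2.2⟩
  · have := spoke_close C h1 h2 (spoke_reg C h1 h2 hz) (close_reg C hz')
    exact ⟨b, Or.inr rfl, this.1, by rw [vpos_pos h1]; exact Prod.ext this.2.1 this.2.2⟩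
  · have := spoke_rim C g1 g2 h1 h2 (spoke_reg C g1 g2 hz') (rim_reg C h1 h2 hz)
    exact ⟨b', this.1, Or.inr rfl, by rw [vpos_pos g1]; exact Prod.ext this.2.1 this.2.2⟩
  · rcases Nat.lt_or_ge a a' with h | h
    · have := rim_rim C h1 h g2 (rim_reg C h1 h2 hz) (rim_reg C g1 g2 hz')
      exact ⟨a', Or.inr this.1, Or.inl rfl, by
        rw [vpos_pos g1]; exact Prod.ext this.2.1 this.2.2⟩
    · have := rim_rim C g1 (by omega) h2 (rim_reg C g1 g2 hz') (rim_reg C h1 h2 hz)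
      exact ⟨a, Or.inl rfl, Or.inr this.1, by
        rw [vpos_pos h1]; exact Prod.ext this.2.1 this.2.2⟩
  · rcases rim_close C h1 h2 (rim_reg C h1 h2 hz) (close_reg C hz') with h | h
    · exact ⟨a, Or.inl rfl, Or.inl h.1, by rw [vpos_pos h1]; exact Prod.ext h.2.1 h.2.2⟩
    · exact ⟨b', Or.inr h.1.symm, Or.inr rfl, by
        rw [vpos_pos (by omega)]; exact Prod.ext h.2.1 h.2.2⟩
  · have := spoke_close C g1 g2 (spoke_reg C g1 g2 hz') (close_reg C hz)
    exact ⟨b', this.1, Or.inr rfl, by rw [vpos_pos g1]; exact Prod.ext this.2.1 this.2.2⟩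
  · rcases rim_close C g1 g2 (rim_reg C g1 g2 hz') (close_reg C hz) with h | h
    · exact ⟨a', Or.inl h.1, Or.inl rfl, by rw [vpos_pos g1]; exact Prod.ext h.2.1 h.2.2⟩
    · exact ⟨b, Or.inr rfl, Or.inr h.1.symm, by
        rw [vpos_pos (by omega)]; exact Prod.ext h.2.1 h.2.2⟩
  · exact absurd ⟨rfl, rfl⟩ hne

/-! ### Wheel segments against matching segments -/

/-- The possible kinds of wheel segments. -/
def WSeg (m : ℕ) (y : ℕ → ℝ) (H : ℝ) (s : (ℝ × ℝ) × (ℝ × ℝ)) : Prop :=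
  (s.1.1 = s.2.1 ∧ (s.1.1 ≤ 1 ∨ 2 ≤ s.1.1)) ∨
  (s.1.2 = s.2.2 ∧ (s.1.2 = 1 ∨ s.1.2 = H)) ∨
  (∃ i, 1 ≤ i ∧ i ≤ m ∧ ((s.1.2 = y i ∧ s.2.2 = y i - 1) ∨ (s.2.2 = y i ∧ s.1.2 = y i - 1))) ∨
  (s.1.1 = 2 ∧ s.1.2 = H ∧ s.2.2 = H - 1 ∧ 3 ≤ s.2.1)

lemma wseg (C : Cfg m x y c H) {a b : ℕ} (h : WE m a b) {s} (hs : s ∈ (wpoly x y c H a b).segs) :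
    WSeg m y H s := by
  have hm := C.hm
  have x1 := C.x1
  have hx : ∀ i, 1 ≤ i → i ≤ m → x i ≤ 1 ∨ 2 ≤ x i := by
    intro i h1 h2
    rcases Nat.lt_or_ge 1 i with h | h
    · right; linarith [C.x3 i h h2]
    · left; obtain rfl : i = 1 := by omega
      exact x1.le
  rcases h with ⟨rfl, h1, h2⟩ | ⟨h1, rfl, h2⟩ | ⟨rfl, rfl⟩
  · by_cases hb : b = 1
    · subst hb
      simp only [wpoly, if_true] at hs
      rcases mem_segs_poly2 hs with rfl | rfl
      · right; left; exact ⟨rfl, Or.inr rfl⟩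
      · left; exact ⟨x1.symm, Or.inl le_rfl⟩
    · simp only [wpoly, if_true, if_neg hb] at hs
      rcases mem_segs_poly2 hs with rfl | rfl
      · right; right; right; exact ⟨rfl, rfl, rfl, C.x3 b (by omega) h2⟩
      · left; exact ⟨rfl, hx b h1 h2⟩
  · simp only [wpoly, if_neg (show a ≠ 0 by omega), if_true] at hs
    rcases mem_segs_poly3 hs with rfl | rfl | rfl
    · right; right; left; exact ⟨a, h1, by omega, Or.inl ⟨rfl, rfl⟩⟩
    · left; exact ⟨rfl, Or.inr (C.c2 a h1 (by omega))⟩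
    · right; right; left; exact ⟨a + 1, by omega, h2, Or.inr ⟨rfl, rfl⟩⟩
  · simp only [wpoly, if_neg (show b ≠ 1 + 1 by omega), one_ne_zero, if_false] at hs
    rcases mem_segs_poly3 hs with rfl | rfl | rfl
    · left; exact ⟨rfl, Or.inl x1.le⟩
    · right; left; exact ⟨rfl, Or.inl rfl⟩
    · left; exact ⟨rfl, hx b (by omega) le_rfl⟩

/-- The possible kinds of matching segments. -/
def MSeg (m : ℕ) (y : ℕ → ℝ) (H : ℝ) (s : (ℝ × ℝ) × (ℝ × ℝ)) : Prop :=
  (s = ((2, H), (1, H - 1))) ∨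
  (∃ i, 1 ≤ i ∧ i ≤ m ∧ y i ≤ H - 2 ∧ s.1.2 = y i ∧ s.2.2 = y i)

lemma wm_overlap (C : Cfg m x y c H) {s t} (hs : WSeg m y H s) (ht : MSeg m y H t) :
    (segment ℝ s.1 s.2 ∩ segment ℝ t.1 t.2).Subsingleton := by
  intro z ⟨z1, z2⟩ w ⟨w1, w2⟩
  obtain ⟨p, p0, p1, p2, p3⟩ := mem_seg z1
  obtain ⟨q, q0, q1, q2, q3⟩ := mem_seg z2
  obtain ⟨p', p0', p1', p2', p3'⟩ := mem_seg w1
  obtain ⟨q', q0', q1', q2', q3'⟩ := mem_seg w2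
  rcases ht with rfl | ⟨i, hi, him, hy, e1, e2⟩
  · simp only at q2 q3 q2' q3'
    have key : z.1 = w.1 := by
      rcases hs with ⟨h1, h2⟩ | ⟨h1, h2⟩ | ⟨j, hj, hjm, h | h⟩ | ⟨h1, h2, h3, h4⟩
      · rw [← h1] at p2 p2'; linarith
      · rw [← h1] at p3 p3'; linarith
      · have := C.yH hj hjm
        rw [h.1, h.2] at p3 p3'; linarith
      · have := C.yH hj hjm
        rw [h.1, h.2] at p3 p3'; linarith
      · rw [h1] at p2 p2'
        have : 0 ≤ p * (s.2.1 - 2) := mul_nonneg p0 (by linarith)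
        have : 0 ≤ p' * (s.2.1 - 2) := mul_nonneg p0' (by linarith)
        linarith
    exact Prod.ext key (by linarith)
  · rw [e1, e2, sub_self, mul_zero, add_zero] at q3 q3'
    refine Prod.ext ?_ (by linarith)
    have hy3 := C.yl i hi him
    have slant : p = p' → z.1 = w.1 := by
      intro h; rw [p2, p2', h]
    rcases hs with ⟨h1, h2⟩ | ⟨h1, h2⟩ | ⟨j, hj, hjm, h | h⟩ | ⟨h1, h2, h3, h4⟩
    · rw [← h1] at p2 p2'; linarith
    · rw [← h1] at p3 p3'
      rcases h2 with h2 | h2 <;> linarith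
    · apply slant
      rw [h.1, h.2] at p3 p3'; linarith
    · apply slant
      rw [h.1, h.2] at p3 p3'; linarith
    · rw [h2, h3] at p3 p3'; linarith

lemma wm_perp (C : Cfg m x y c H) {s t} (hs : WSeg m y H s) (ht : MSeg m y H t)
    (hc : SegCross s t) : SegPerp s t := by
  obtain ⟨z, z1, z2⟩ := hc
  obtain ⟨p, p0, p1, p2, p3⟩ := mem_oseg z1
  obtain ⟨q, q0, q1, q2, q3⟩ := mem_oseg z2
  unfold SegPerp
  rcases ht with rfl | ⟨i, hi, him, hy, e1, e2⟩
  · exfalso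
    simp only at q2 q3
    rcases hs with ⟨h1, h2⟩ | ⟨h1, h2⟩ | ⟨j, hj, hjm, h | h⟩ | ⟨h1, h2, h3, h4⟩
    · rw [← h1] at p2
      rcases h2 with h2 | h2 <;> linarith
    · rw [← h1] at p3
      have := C.y1u
      have := C.yl 1 le_rfl (by linarith [C.hm])
      rcases h2 with h2 | h2 <;> linarith
    · have := C.yH hj hjm
      rw [h.1, h.2] at p3; linarith
    · have := C.yH hj hjm
      rw [h.1, h.2] at p3; linarith
    · rw [h1] at p2
      have : 0 < p * (s.2.1 - 2) := mul_pos p0 (by linarith)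
      linarith
  · rw [e1, e2, sub_self, mul_zero, add_zero] at q3
    rw [e1, e2, sub_self, mul_zero, add_zero]
    have hy3 := C.yl i hi him
    rcases hs with ⟨h1, h2⟩ | ⟨h1, h2⟩ | ⟨j, hj, hjm, h | h⟩ | ⟨h1, h2, h3, h4⟩
    · rw [h1, sub_self, zero_mul]
    · rw [← h1] at p3
      rcases h2 with h2 | h2 <;> linarith
    · have := C.yint i j hi him hj hjm
      rw [h.1, h.2] at p3
      rcases this with h | h | h <;> linarith
    · have := C.yint i j hi him hj hjm
      rw [h.1, h.2] at p3
      rcases this with h | h | h <;> linarith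
    · rw [h2, h3] at p3; linarith

end


/-! ### The integer coordinates -/

/-- Rows, from the mate function `σ`. -/
def yZ (m : ℕ) (σ : ℕ → ℕ) (i : ℕ) : ℤ :=
  (m : ℤ) + 2 - ((min i (σ i) : ℕ) : ℤ) + (if σ 1 < min i (σ i) then 1 else 0)

open Classical in
/-- Horizontal gap between rim vertices `j` and `j + 1`. -/
noncomputable def gapZ (m : ℕ) (y : ℕ → ℤ) (j : ℕ) : ℤ :=
  if j = 1 ∨ (y j < y (j + 1) ∧ (j + 1 = m ∨ y (j + 2) ≤ y (j + 1))) then 2 else 1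

/-- Columns of the rim vertices; `xZ m y j` is the column of vertex `j + 1`. -/
noncomputable def xZ (m : ℕ) (y : ℕ → ℤ) : ℕ → ℤ
  | 0 => 1
  | (j + 1) => xZ m y j + gapZ m y (j + 1)

/-- Columns used by the rim edges. -/
noncomputable def cZ (m : ℕ) (y : ℕ → ℤ) (j : ℕ) : ℤ :=
  if y (j + 1) ≤ y j then xZ m y j - 1 else xZ m y (j - 1) + 1

section
variable {m : ℕ} {y : ℕ → ℤ}

lemma gapZ_cases (j : ℕ) : gapZ m y j = 1 ∨ gapZ m y j = 2 := by
  unfold gapZ; split_ifs <;> simp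

lemma xZ_succ (j : ℕ) : xZ m y (j + 1) = xZ m y j + gapZ m y (j + 1) := rfl

lemma xZ_mono {i j : ℕ} (h : i < j) : xZ m y i + 1 ≤ xZ m y j := by
  induction j with
  | zero => omega
  | succ j ih =>
    rw [xZ_succ]
    have := gapZ_cases (m := m) (y := y) (j + 1)
    rcases Nat.lt_or_ge i j with h' | h'
    · have := ih h'; omega
    · obtain rfl : i = j := by omega
      omega

lemma xZ_one : xZ m y 1 = 3 := by
  simp [xZ, gapZ]

lemma xZ_bound (j : ℕ) (hj : 1 ≤ j) (hjm : j + 1 ≤ m) :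
    2 * xZ m y j ≤ 3 * (j + 1) ∨
      (2 * xZ m y j ≤ 3 * (j + 1) + 1 ∧ (j + 1 = m ∨ y (j + 2) ≤ y (j + 1))) := by
  induction j with
  | zero => omega
  | succ j ih =>
    rcases Nat.eq_zero_or_pos j with rfl | hj0
    · left; rw [zero_add, xZ_one]; norm_num
    · have ih := ih hj0 (by omega)
      rw [xZ_succ]
      unfold gapZ
      push_cast at ih ⊢
      split_ifs with h
      · rcases h with h | h
        · omega
        · right
          rcases ih with ih | ⟨ih, ih' | ih'⟩
          · refine ⟨by linarith, ?_⟩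
            simpa [add_assoc] using h.2
          · omega
          · have := h.1
            simp only [add_assoc] at this ih'
            norm_num at this ih'
            linarith
      · left
        rcases ih with ih | ⟨ih, -⟩ <;> linarith

end

/-- The properties of the mate function used in the construction. -/
structure Mate (m : ℕ) (σ : ℕ → ℕ) : Prop where
  le : ∀ i, i ≤ m → σ i ≤ m
  inv : ∀ i, i ≤ m → σ (σ i) = i
  zero : ∀ i, 1 ≤ i → i ≤ m → σ i = 0 → i = 1

section
variable {m : ℕ} {σ : ℕ → ℕ}

lemma yZ_one : yZ m σ 1 = if σ 1 = 0 then (m : ℤ) + 2 else m + 1 := by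
  unfold yZ
  split_ifs <;> omega

lemma yZ_range (S : Mate m σ) (hm : 3 ≤ m) {i : ℕ} (h2 : 2 ≤ i) (him : i ≤ m) :
    3 ≤ yZ m σ i ∧ yZ m σ i ≤ m + 1 := by
  have a1 := S.le i him
  have a2 := S.inv i him
  have a3 := S.zero i (by omega) him
  have a4 := S.le 1 (by omega)
  have a5 := S.inv 1 (by omega)
  have a6 : σ 1 = i → σ i = 1 := by rintro rfl; exact a5
  have a7 : σ i = 1 → σ 1 = i := by intro h; rw [← h]; exact a2
  unfold yZ
  split_ifs <;> omega

lemma yZ_eq (S : Mate m σ) {i : ℕ} (him : i ≤ m) : yZ m σ (σ i) = yZ m σ i := by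
  unfold yZ
  rw [S.inv i him, min_comm]

lemma yZ_inj (S : Mate m σ) (hm : 3 ≤ m) {i j : ℕ} (hi : 1 ≤ i) (him : i ≤ m) (hj : 1 ≤ j)
    (hjm : j ≤ m) (si : σ i ≠ i) (sj : σ j ≠ j) (si0 : σ i ≠ 0) (sj0 : σ j ≠ 0)
    (h : yZ m σ i = yZ m σ j) : i = j ∨ i = σ j := by
  have a2 := S.inv i him
  have b2 := S.inv j hjm
  have a5 := S.inv 1 (by omega)
  have a6 : σ 1 = i → σ i = 1 := by rintro rfl; exact a5
  have b6 : σ 1 = j → σ j = 1 := by rintro rfl; exact a5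
  have a7 : σ i = σ 1 → i = 1 := by intro h; rw [← a2, h, a5]
  have b7 : σ j = σ 1 → j = 1 := by intro h; rw [← b2, h, a5]
  have c1 : σ i = σ j → i = j := by intro h; rw [← a2, h, b2]
  have c2 : σ i = j → i = σ j := by rintro rfl; exact a2.symm
  have a8 : i = 1 → σ 1 = σ i := by rintro rfl; rfl
  have b8 : j = 1 → σ 1 = σ j := by rintro rfl; rfl
  unfold yZ at h
  split_ifs at h <;> omega

/-- The real coordinates form a configuration. -/
lemma cfg_of (S : Mate m σ) (hm : 3 ≤ m) :
    Cfg m (fun i => ((xZ m (yZ m σ) (i - 1) : ℤ) : ℝ)) (fun i => ((yZ m σ i : ℤ) : ℝ))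
      (fun j => ((cZ m (yZ m σ) j : ℤ) : ℝ)) (((m : ℤ) + 3 : ℤ) : ℝ) := by
  set y := yZ m σ with hy
  have y1 : m + 1 ≤ y 1 ∧ y 1 ≤ m + 2 := by
    rw [hy, yZ_one]; split_ifs <;> omega
  have yr : ∀ i, 2 ≤ i → i ≤ m → 3 ≤ y i ∧ y i ≤ m + 1 := fun i h h' => yZ_range S hm h h'
  have g : ∀ j, 1 ≤ j → xZ m y j = xZ m y (j - 1) + gapZ m y j := by
    intro j hj
    obtain ⟨k, rfl⟩ : ∃ k, j = k + 1 := ⟨j - 1, by omega⟩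
    rfl
  have gD : ∀ j, 2 ≤ j → y (j + 1) ≤ y j → gapZ m y j = 1 := by
    intro j hj h
    unfold gapZ
    rw [if_neg]
    rintro (h' | h')
    · omega
    · linarith [h'.1]
  have g1 : gapZ m y 1 = 2 := by simp [gapZ]
  have y12 : y (1 + 1) ≤ y 1 := by
    have := yr 2 le_rfl (by omega)
    norm_num
    omega
  refine ⟨hm, ?_, ?_, ?_, ?_, ?_, ?_, ?_, ?_, ?_, ?_, ?_, ?_, ?_, ?_, ?_, ?_⟩
  · simp [xZ]
  · intro i h1 h2
    rcases Nat.lt_or_ge 2 i with h | h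
    · have := xZ_mono (m := m) (y := y) (show 1 < i - 1 by omega)
      rw [xZ_one] at this
      exact_mod_cast (by omega : (3 : ℤ) ≤ xZ m y (i - 1))
    · obtain rfl : i = 2 := by omega
      simp [xZ_one]
  · intro i j h1 h2 h3
    exact_mod_cast xZ_mono (m := m) (y := y) (show i - 1 < j - 1 by omega)
  · intro j h1 h2
    have := g j h1
    have : cZ m y j = xZ m y (j - 1) ∨ cZ m y j = xZ m y (j - 1) + 1 := by
      unfold cZ
      have := gapZ_cases (m := m) (y := y) j
      split_ifs <;> omega
    exact_mod_cast this
  · intro j h1 h2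
    have := g j h1
    have : cZ m y j = xZ m y j ∨ cZ m y j = xZ m y j - 1 := by
      unfold cZ
      have := gapZ_cases (m := m) (y := y) j
      split_ifs <;> omega
    simp only [Nat.add_sub_cancel]
    exact_mod_cast this
  · have : cZ m y 1 ≠ xZ m y 0 := by
      unfold cZ
      rw [if_pos y12, xZ_one]
      simp [xZ]
    exact_mod_cast this
  · intro j h1 h2
    have : ¬ (cZ m y j = xZ m y j ∧ cZ m y (j + 1) = xZ m y j) := by
      have e1 := g j h1
      have e2 := g (j + 1) (by omega)
      simp only [Nat.add_sub_cancel] at e2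
      rintro ⟨f1, f2⟩
      unfold cZ at f1 f2
      simp only [Nat.add_sub_cancel] at f2
      split_ifs at f1 f2 with h3 h4
      all_goals try omega
      have : gapZ m y j = 2 := by
        unfold gapZ
        rw [if_pos]
        right
        exact ⟨by omega, Or.inr (by assumption)⟩
      omega
    simp only [Nat.add_sub_cancel]
    exact_mod_cast this
  · intro j h1 h2
    have : cZ m y j ≠ xZ m y j := by
      have e1 := g j h1
      intro f1
      unfold cZ at f1
      split_ifs at f1 with h3
      · omega
      have : gapZ m y j = 2 := by
        unfold gapZ
        rw [if_pos]
        right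
        exact ⟨by omega, Or.inl h2⟩
      omega
    simp only [Nat.add_sub_cancel]
    exact_mod_cast this
  · intro j h1 h2 h
    have h' : cZ m y j = xZ m y (j - 1) := by exact_mod_cast h
    have : y (j + 1) ≤ y j := by
      unfold cZ at h'
      split_ifs at h' with h3 <;> omega
    exact_mod_cast this
  · intro j h1 h2 h
    simp only [Nat.add_sub_cancel] at h
    have h' : cZ m y j = xZ m y j := by exact_mod_cast h
    have : y j + 1 ≤ y (j + 1) := by
      unfold cZ at h'
      split_ifs at h' with h3 <;> omega
    exact_mod_cast this
  · intro j h1 h2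
    have : 2 ≤ cZ m y j := by
      have e : xZ m y 1 ≤ xZ m y j := by
        rcases Nat.lt_or_ge 1 j with h | h
        · have := xZ_mono (m := m) (y := y) h; omega
        · obtain rfl : j = 1 := by omega
          exact le_rfl
      have e' : xZ m y 0 ≤ xZ m y (j - 1) := by
        rcases Nat.lt_or_ge 1 j with h | h
        · have := xZ_mono (m := m) (y := y) (show 0 < j - 1 by omega); omega
        · obtain rfl : j = 1 := by omega
          exact le_rfl
      rw [xZ_one] at e
      rw [show xZ m y 0 = 1 from rfl] at e'
      unfold cZ
      split_ifs <;> omega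
    exact_mod_cast this
  · have : (m : ℤ) + 3 - 2 ≤ y 1 := by omega
    exact_mod_cast this
  · have : y 1 ≤ (m : ℤ) + 3 - 1 := by omega
    exact_mod_cast this
  · intro i h1 h2
    have : 3 ≤ y i := by
      rcases Nat.lt_or_ge 1 i with h | h
      · exact (yr i h h2).1
      · obtain rfl : i = 1 := by omega
        omega
    exact_mod_cast this
  · intro i h1 h2
    have : y i ≤ (m : ℤ) + 3 - 2 := by
      have := yr i h1 h2; omega
    exact_mod_cast this
  · intro i j _ _ _ _
    have : y i = y j ∨ y i + 1 ≤ y j ∨ y j + 1 ≤ y i := by omega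
    exact_mod_cast this

end


/-! ### Grid bounds -/

section
variable {m : ℕ} {σ : ℕ → ℕ}

lemma xZ_grid {y : ℕ → ℤ} (hm : 3 ≤ m) {j : ℕ} (hj : j + 1 ≤ m) :
    1 ≤ xZ m y j ∧ xZ m y j ≤ ((3 * (m + 1) / 2 : ℕ) : ℤ) - 1 := by
  have h0 : xZ m y 0 = 1 := rfl
  have h1 : 1 ≤ xZ m y j := by
    rcases Nat.eq_zero_or_pos j with rfl | h
    · exact le_rfl
    · have := xZ_mono (m := m) (y := y) h; omega
  have h2 : xZ m y j ≤ xZ m y (m - 1) := by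
    rcases Nat.lt_or_ge j (m - 1) with h | h
    · have := xZ_mono (m := m) (y := y) h; omega
    · obtain rfl : j = m - 1 := by omega
      exact le_rfl
  have h3 := xZ_bound (m := m) (y := y) (m - 1) (by omega) (by omega)
  refine ⟨h1, ?_⟩
  rcases h3 with h3 | ⟨h3, -⟩ <;> omega

lemma yZ_grid (S : Mate m σ) (hm : 3 ≤ m) {i : ℕ} (h1 : 1 ≤ i) (h2 : i ≤ m) :
    3 ≤ yZ m σ i ∧ yZ m σ i ≤ m + 2 := by
  rcases Nat.lt_or_ge 1 i with h | h
  · have := yZ_range S hm h h2; omega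
  · obtain rfl : i = 1 := by omega
    rw [yZ_one]; split_ifs <;> omega

lemma gridPt {a b : ℤ} {u v : ℝ} (p q : ℤ) (hu : u = p) (hv : v = q) (h1 : 1 ≤ p) (h2 : p ≤ a)
    (h3 : 1 ≤ q) (h4 : q ≤ b) : OnGridPt a b (u, v) := ⟨p, q, by rw [hu, hv], h1, h2, h3, h4⟩

/-- Real `x`-coordinates. -/
noncomputable def xR (m : ℕ) (σ : ℕ → ℕ) : ℕ → ℝ := fun i => ((xZ m (yZ m σ) (i - 1) : ℤ) : ℝ)

/-- Real `y`-coordinates. -/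
noncomputable def yR (m : ℕ) (σ : ℕ → ℕ) : ℕ → ℝ := fun i => ((yZ m σ i : ℤ) : ℝ)

/-- Real columns of rim edges. -/
noncomputable def cR (m : ℕ) (σ : ℕ → ℕ) : ℕ → ℝ := fun j => ((cZ m (yZ m σ) j : ℤ) : ℝ)

/-- Real row of the center. -/
noncomputable def hR (m : ℕ) : ℝ := (((m : ℤ) + 3 : ℤ) : ℝ)

lemma vpos_grid (S : Mate m σ) (hm : 3 ≤ m) {i : ℕ} (him : i ≤ m) :
    OnGridPt (((3 * (m + 1) / 2 : ℕ) : ℤ) - 1) ((m : ℤ) + 3)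
      (vpos (xR m σ) (yR m σ) (hR m) i) := by
  rcases Nat.eq_zero_or_pos i with rfl | h
  · rw [vpos_zero]
    exact gridPt 2 (m + 3) (by norm_num) rfl (by norm_num) (by omega) (by omega) (by omega)
  · rw [vpos_pos h]
    have h1 := xZ_grid (m := m) (y := yZ m σ) hm (show i - 1 + 1 ≤ m by omega)
    have h2 := yZ_grid S hm h him
    exact gridPt _ _ rfl rfl h1.1 h1.2 (by omega) (by omega)

lemma wpoly_grid (S : Mate m σ) (hm : 3 ≤ m) {a b : ℕ} (h : WE m a b)
    (k : Fin ((wpoly (xR m σ) (yR m σ) (cR m σ) (hR m) a b).n + 1)) :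
    OnGridPt (((3 * (m + 1) / 2 : ℕ) : ℤ) - 1) ((m : ℤ) + 3)
      ((wpoly (xR m σ) (yR m σ) (cR m σ) (hR m) a b).pts k) := by
  have h0 : OnGridPt (((3 * (m + 1) / 2 : ℕ) : ℤ) - 1) ((m : ℤ) + 3) ((2 : ℝ), hR m) := by
    have := vpos_grid S hm (Nat.zero_le m)
    rwa [vpos_zero] at this
  have hv : ∀ i, 1 ≤ i → i ≤ m → OnGridPt (((3 * (m + 1) / 2 : ℕ) : ℤ) - 1) ((m : ℤ) + 3)
      (xR m σ i, yR m σ i) := by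
    intro i h1 h2
    have := vpos_grid S hm h2
    rwa [vpos_pos h1] at this
  have hx := fun i (h1 : 1 ≤ i) (h2 : i ≤ m) =>
    xZ_grid (m := m) (y := yZ m σ) hm (show i - 1 + 1 ≤ m by omega)
  have hyy := fun i (h1 : 1 ≤ i) (h2 : i ≤ m) => yZ_grid S hm h1 h2
  have hxy : ∀ i, 1 ≤ i → i ≤ m → ∀ (v : ℝ) (q : ℤ), v = q → 1 ≤ q → q ≤ m + 3 →
      OnGridPt (((3 * (m + 1) / 2 : ℕ) : ℤ) - 1) ((m : ℤ) + 3) (xR m σ i, v) := by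
    intro i h1 h2 v q e1 e2 e3
    exact gridPt _ q rfl e1 (hx i h1 h2).1 (hx i h1 h2).2 e2 e3
  have hc : ∀ i j, 1 ≤ i → i + 1 ≤ m → 1 ≤ j → j ≤ m →
      OnGridPt (((3 * (m + 1) / 2 : ℕ) : ℤ) - 1) ((m : ℤ) + 3) (cR m σ i, yR m σ j - 1) := by
    intro i j h1 h2 h3 h4
    have e := hyy j h3 h4
    have e1 := (cfg_of S hm).c2 i h1 (by omega)
    have e2 := (cfg_of S hm).cr i h1 (by omega)
    have e1' : 2 ≤ cZ m (yZ m σ) i := by exact_mod_cast e1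
    have e2' : cZ m (yZ m σ) i = xZ m (yZ m σ) i ∨ cZ m (yZ m σ) i = xZ m (yZ m σ) i - 1 := by
      simp only [Nat.add_sub_cancel] at e2
      exact_mod_cast e2
    have e3 := xZ_grid (m := m) (y := yZ m σ) hm h2
    exact gridPt (cZ m (yZ m σ) i) (yZ m σ j - 1) rfl (by simp [yR]) (by omega) (by omega)
      (by omega) (by omega)
  rcases h with ⟨rfl, h1, h2⟩ | ⟨h1, rfl, h2⟩ | ⟨rfl, rfl⟩
  · by_cases hb : b = 1
    · subst hb
      revert k
      rw [show wpoly (xR m σ) (yR m σ) (cR m σ) (hR m) 0 1 = poly2 (2, hR m) (1, hR m) (xR m σ 1, yR m σ 1) by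
        simp [wpoly]]
      intro k
      change Fin 3 at k
      fin_cases k
      · exact h0
      · exact gridPt 1 (m + 3) (by norm_num) rfl le_rfl (by omega) (by omega) le_rfl
      · exact hv 1 le_rfl h2
    · revert k
      rw [show wpoly (xR m σ) (yR m σ) (cR m σ) (hR m) 0 b =
          poly2 (2, hR m) (xR m σ b, hR m - 1) (xR m σ b, yR m σ b) by
        simp [wpoly, hb]]
      intro k
      change Fin 3 at k
      fin_cases k
      · exact h0
      · exact hxy b h1 h2 _ (m + 2) (by simp [hR]; ring) (by omega) (by omega)
      · exact hv b h1 h2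
  · revert k
    rw [show wpoly (xR m σ) (yR m σ) (cR m σ) (hR m) a (a + 1) =
        poly3 (xR m σ a, yR m σ a) (cR m σ a, yR m σ a - 1) (cR m σ a, yR m σ (a + 1) - 1)
          (xR m σ (a + 1), yR m σ (a + 1)) by
      simp [wpoly, show a ≠ 0 by omega]]
    intro k
    change Fin 4 at k
    fin_cases k
    · exact hv a h1 (by omega)
    · exact hc a a h1 h2 h1 (by omega)
    · exact hc a (a + 1) h1 h2 (by omega) h2
    · exact hv (a + 1) (by omega) h2
  · revert k
    rw [show wpoly (xR b σ) (yR b σ) (cR b σ) (hR b) 1 b =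
        poly3 (xR b σ 1, yR b σ 1) (xR b σ 1, 1) (xR b σ b, 1) (xR b σ b, yR b σ b) by
      simp [wpoly, show b ≠ 2 by omega]]
    intro k
    change Fin 4 at k
    fin_cases k
    · exact hv 1 le_rfl (by omega)
    · exact hxy 1 le_rfl (by omega) _ 1 (by simp) (by omega) (by omega)
    · exact hxy b (by omega) le_rfl _ 1 (by simp) (by omega) (by omega)
    · exact hv b (by omega) le_rfl

lemma wpoly_n (x y c : ℕ → ℝ) (H : ℝ) (a b : ℕ) : (wpoly x y c H a b).n ≤ 3 := by
  unfold wpoly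
  split_ifs <;> simp [poly2, poly3]

lemma wpoly_first (x y c : ℕ → ℝ) (H : ℝ) (a b : ℕ) :
    (wpoly x y c H a b).first = vpos x y H a := by
  unfold wpoly vpos
  split_ifs <;> rfl

lemma wpoly_last (x y c : ℕ → ℝ) (H : ℝ) {a b : ℕ} (hb : 1 ≤ b) :
    (wpoly x y c H a b).last = vpos x y H b := by
  rw [vpos_pos hb]
  unfold wpoly
  split_ifs <;> rfl

/-- Index pairs of matching edges. -/
def ME (m : ℕ) (σ : ℕ → ℕ) (a b : ℕ) : Prop := a < b ∧ b ≤ m ∧ σ a = b ∧ σ b = a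

lemma mseg (S : Mate m σ) (hm : 3 ≤ m) {a b : ℕ} (h : ME m σ a b) :
    MSeg m (yR m σ) (hR m)
      (vpos (xR m σ) (yR m σ) (hR m) a, vpos (xR m σ) (yR m σ) (hR m) b) := by
  obtain ⟨h1, h2, h3, h4⟩ := h
  rcases Nat.eq_zero_or_pos a with rfl | ha
  · left
    obtain rfl := S.zero b h1 h2 h4
    rw [vpos_zero, vpos_pos le_rfl]
    have e : yR m σ 1 = hR m - 1 := by
      simp only [yR, hR, yZ_one, h4, if_true]
      push_cast; ring
    rw [e, (cfg_of S hm).x1.symm]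
    rfl
  · right
    refine ⟨b, by omega, h2, ?_, ?_, ?_⟩
    · exact (cfg_of S hm).yu b (by omega) h2
    · rw [vpos_pos ha]
      simp only [yR]
      rw [← h4, yZ_eq S h2]
    · rw [vpos_pos (i := b) (by omega)]

lemma planar_matching (S : Mate m σ) (hm : 3 ≤ m) {a b a' b' : ℕ} (h : ME m σ a b)
    (h' : ME m σ a' b') (hne : ¬ (a = a' ∧ b = b')) {z : ℝ × ℝ}
    (hz : z ∈ segment ℝ (vpos (xR m σ) (yR m σ) (hR m) a) (vpos (xR m σ) (yR m σ) (hR m) b))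
    (hz' : z ∈ segment ℝ (vpos (xR m σ) (yR m σ) (hR m) a')
      (vpos (xR m σ) (yR m σ) (hR m) b')) : False := by
  -- in each case the row of the point `z`
  have key : ∀ a b, ME m σ a b →
      z ∈ segment ℝ (vpos (xR m σ) (yR m σ) (hR m) a) (vpos (xR m σ) (yR m σ) (hR m) b) →
      (a = 0 ∧ b = 1 ∧ hR m - 1 ≤ z.2) ∨ (1 ≤ a ∧ z.2 = yR m σ b ∧ z.2 ≤ hR m - 2) := by
    intro a b h hz
    have hs := mseg S hm h
    obtain ⟨h1, h2, h3, h4⟩ := h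
    obtain ⟨t, t0, t1, -, e2⟩ := mem_seg hz
    rcases Nat.eq_zero_or_pos a with rfl | ha
    · left
      obtain rfl := S.zero b h1 h2 h4
      refine ⟨rfl, rfl, ?_⟩
      rcases hs with hs | ⟨i, hi, him, hy, e1, -⟩
      · rw [Prod.mk.injEq] at hs
        rw [hs.1, hs.2] at e2
        simp only at e2
        linarith
      · rw [vpos_zero] at e1
        simp only at e1
        linarith
    · right
      refine ⟨ha, ?_⟩
      have := (cfg_of S hm).yu b (by omega) h2
      have e : yR m σ a = yR m σ b := by
        simp only [yR]
        rw [← h4, yZ_eq S h2]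
      rw [vpos_pos ha, vpos_pos (by omega : 1 ≤ b)] at e2
      simp only [e, sub_self, mul_zero, add_zero] at e2
      refine ⟨e2, ?_⟩
      rw [e2]
      exact this
  rcases key a b h hz with ⟨rfl, rfl, g⟩ | ⟨ha, g1, g2⟩ <;>
    rcases key a' b' h' hz' with ⟨rfl, rfl, g'⟩ | ⟨ha', g1', g2'⟩
  · exact hne ⟨rfl, rfl⟩
  · linarith
  · linarith
  · have e : yZ m σ b = yZ m σ b' := by
      have : yR m σ b = yR m σ b' := by rw [← g1, ← g1']
      simp only [yR] at this
      exact_mod_cast this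
    obtain ⟨h1, h2, h3, h4⟩ := h
    obtain ⟨h1', h2', h3', h4'⟩ := h'
    rcases yZ_inj S hm (by omega) h2 (by omega) h2' (by omega) (by omega) (by omega) (by omega) e
      with h | h
    · subst h
      exact hne ⟨by rw [← h4, ← h4'], rfl⟩
    · rw [h4'] at h
      subst h
      omega

end

/-! ### The drawing -/

section
variable {V : Type} {W M : SimpleGraph V} {m : ℕ} {σ : ℕ → ℕ} {idx : V → ℕ}

lemma vpos_inj (S : Mate m σ) (hm : 3 ≤ m) {i j : ℕ} (hi : i ≤ m) (hj : j ≤ m)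
    (h : vpos (xR m σ) (yR m σ) (hR m) i = vpos (xR m σ) (yR m σ) (hR m) j) : i = j := by
  have C := cfg_of S hm
  rcases Nat.eq_zero_or_pos i with rfl | hi0 <;> rcases Nat.eq_zero_or_pos j with rfl | hj0
  · rfl
  · rw [vpos_zero, vpos_pos hj0, Prod.mk.injEq] at h
    have : yR m σ j ≤ hR m - 1 := C.yH hj0 hj
    linarith [h.2]
  · rw [vpos_zero, vpos_pos hi0, Prod.mk.injEq] at h
    have : yR m σ i ≤ hR m - 1 := C.yH hi0 hi
    linarith [h.2]
  · rw [vpos_pos hi0, vpos_pos hj0, Prod.mk.injEq] at h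
    rcases lt_trichotomy i j with h' | h' | h'
    · have : xR m σ i + 1 ≤ xR m σ j := C.mono i j hi0 h' hj
      linarith [h.1]
    · exact h'
    · have : xR m σ j + 1 ≤ xR m σ i := C.mono j i hj0 h' hi
      linarith [h.1]

/-- The polyline of a wheel edge. -/
noncomputable def wdraw (m : ℕ) (σ : ℕ → ℕ) (idx : V → ℕ) : Sym2 V → Polyline :=
  Sym2.lift ⟨fun u v => wpoly (xR m σ) (yR m σ) (cR m σ) (hR m)
    (min (idx u) (idx v)) (max (idx u) (idx v)), fun u v => by
      simp only [min_comm (idx u), max_comm (idx u)]⟩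

/-- The polyline of a matching edge. -/
noncomputable def mdraw (m : ℕ) (σ : ℕ → ℕ) (idx : V → ℕ) : Sym2 V → Polyline :=
  Sym2.lift ⟨fun u v => poly1 (vpos (xR m σ) (yR m σ) (hR m) (min (idx u) (idx v)))
    (vpos (xR m σ) (yR m σ) (hR m) (max (idx u) (idx v))), fun u v => by
      simp only [min_comm (idx u), max_comm (idx u)]⟩

lemma edge_ordered (hinj : Function.Injective idx) (G : SimpleGraph V) {e : Sym2 V}
    (he : e ∈ G.edgeSet) : ∃ u v, e = s(u, v) ∧ G.Adj u v ∧ idx u < idx v := by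
  induction e using Sym2.ind with
  | _ u v =>
    rw [SimpleGraph.mem_edgeSet] at he
    rcases lt_trichotomy (idx u) (idx v) with h | h | h
    · exact ⟨u, v, rfl, he, h⟩
    · exact absurd (hinj h) he.ne
    · exact ⟨v, u, Sym2.eq_swap, he.symm, h⟩

lemma wdraw_mk {u v : V} (h : idx u < idx v) : wdraw m σ idx s(u, v) =
    wpoly (xR m σ) (yR m σ) (cR m σ) (hR m) (idx u) (idx v) := by
  simp [wdraw, min_eq_left h.le, max_eq_right h.le]

lemma mdraw_mk {u v : V} (h : idx u < idx v) : mdraw m σ idx s(u, v) =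
    poly1 (vpos (xR m σ) (yR m σ) (hR m) (idx u)) (vpos (xR m σ) (yR m σ) (hR m) (idx v)) := by
  simp [mdraw, min_eq_left h.le, max_eq_right h.le]

theorem draw_exists (S : Mate m σ) (hm : 3 ≤ m) (hinj : Function.Injective idx)
    (hle : ∀ v, idx v ≤ m)
    (hW : ∀ u v, W.Adj u v → idx u < idx v → WE m (idx u) (idx v))
    (hM : ∀ u v, M.Adj u v → idx u < idx v → ME m σ (idx u) (idx v)) :
    ∃ D : SimDrawing ![W, M], D.IsRacSim ∧
      D.OnGrid (((3 * (m + 1) / 2 : ℕ) : ℤ) - 1) ((m : ℤ) + 3) ∧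
      D.BendsAtMost 0 2 ∧
      ∀ e ∈ M.edgeSet, (D.poly 1 e).n = 1 := by
  have C := cfg_of S hm
  change Cfg m (xR m σ) (yR m σ) (cR m σ) (hR m) at C
  have joinW : ∀ a b : V, W.Adj a b →
      ((wdraw m σ idx s(a, b)).first = vpos (xR m σ) (yR m σ) (hR m) (idx a) ∧
        (wdraw m σ idx s(a, b)).last = vpos (xR m σ) (yR m σ) (hR m) (idx b)) ∨
      ((wdraw m σ idx s(a, b)).first = vpos (xR m σ) (yR m σ) (hR m) (idx b) ∧
        (wdraw m σ idx s(a, b)).last = vpos (xR m σ) (yR m σ) (hR m) (idx a)) := by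
    intro a b hab
    rcases lt_trichotomy (idx a) (idx b) with h | h | h
    · left
      rw [wdraw_mk h]
      exact ⟨wpoly_first .., wpoly_last _ _ _ _ (by omega)⟩
    · exact absurd (hinj h) hab.ne
    · right
      rw [Sym2.eq_swap, wdraw_mk h]
      exact ⟨wpoly_first .., wpoly_last _ _ _ _ (by omega)⟩
  have joinM : ∀ a b : V, M.Adj a b →
      ((mdraw m σ idx s(a, b)).first = vpos (xR m σ) (yR m σ) (hR m) (idx a) ∧
        (mdraw m σ idx s(a, b)).last = vpos (xR m σ) (yR m σ) (hR m) (idx b)) ∨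
      ((mdraw m σ idx s(a, b)).first = vpos (xR m σ) (yR m σ) (hR m) (idx b) ∧
        (mdraw m σ idx s(a, b)).last = vpos (xR m σ) (yR m σ) (hR m) (idx a)) := by
    intro a b hab
    rcases lt_trichotomy (idx a) (idx b) with h | h | h
    · left
      rw [mdraw_mk h]
      exact ⟨rfl, rfl⟩
    · exact absurd (hinj h) hab.ne
    · right
      rw [Sym2.eq_swap, mdraw_mk h]
      exact ⟨rfl, rfl⟩
  let D : SimDrawing ![W, M] :=
    { pos := fun v => vpos (xR m σ) (yR m σ) (hR m) (idx v)
      pos_injective := fun u v h => hinj (vpos_inj S hm (hle u) (hle v) h)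
      poly := ![wdraw m σ idx, mdraw m σ idx]
      joins := by
        intro i
        fin_cases i
        · exact joinW
        · exact joinM }
  have planW : ∀ e ∈ W.edgeSet, ∀ e' ∈ W.edgeSet, e ≠ e' →
      (wdraw m σ idx e).curve ∩ (wdraw m σ idx e').curve ⊆
        {p | ∃ v : V, v ∈ e ∧ v ∈ e' ∧ p = vpos (xR m σ) (yR m σ) (hR m) (idx v)} := by
    rintro e he e' he' hne z ⟨hz, hz'⟩
    obtain ⟨u, v, rfl, ha, hlt⟩ := edge_ordered hinj W he
    obtain ⟨u', v', rfl, ha', hlt'⟩ := edge_ordered hinj W he'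
    rw [wdraw_mk hlt] at hz
    rw [wdraw_mk hlt'] at hz'
    obtain ⟨i, h1, h2, h3⟩ := planar_wheel C (hW _ _ ha hlt) (hW _ _ ha' hlt') (by
      rintro ⟨e1, e2⟩
      exact hne (by rw [hinj e1, hinj e2])) hz hz'
    rcases h1 with rfl | rfl
    · refine ⟨u, by simp, ?_, h3⟩
      rcases h2 with h | h
      · rw [hinj h]; simp
      · rw [hinj h]; simp
    · refine ⟨v, by simp, ?_, h3⟩
      rcases h2 with h | h
      · rw [hinj h]; simp
      · rw [hinj h]; simp
  have planM : ∀ e ∈ M.edgeSet, ∀ e' ∈ M.edgeSet, e ≠ e' →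
      ∀ z, z ∈ (mdraw m σ idx e).curve → z ∈ (mdraw m σ idx e').curve → False := by
    rintro e he e' he' hne z hz hz'
    obtain ⟨u, v, rfl, ha, hlt⟩ := edge_ordered hinj M he
    obtain ⟨u', v', rfl, ha', hlt'⟩ := edge_ordered hinj M he'
    rw [mdraw_mk hlt] at hz
    rw [mdraw_mk hlt'] at hz'
    obtain ⟨s, hs, hz⟩ := mem_curve hz
    obtain ⟨s', hs', hz'⟩ := mem_curve hz'
    rw [mem_segs_poly1 hs] at hz
    rw [mem_segs_poly1 hs'] at hz'
    exact planar_matching S hm (hM _ _ ha hlt) (hM _ _ ha' hlt') (by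
      rintro ⟨e1, e2⟩
      exact hne (by rw [hinj e1, hinj e2])) hz hz'
  have segW : ∀ e ∈ W.edgeSet, ∀ s ∈ (wdraw m σ idx e).segs, WSeg m (yR m σ) (hR m) s := by
    intro e he s hs
    obtain ⟨u, v, rfl, ha, hlt⟩ := edge_ordered hinj W he
    rw [wdraw_mk hlt] at hs
    exact wseg C (hW _ _ ha hlt) hs
  have segM : ∀ e ∈ M.edgeSet, ∀ s ∈ (mdraw m σ idx e).segs, MSeg m (yR m σ) (hR m) s := by
    intro e he s hs
    obtain ⟨u, v, rfl, ha, hlt⟩ := edge_ordered hinj M he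
    rw [mdraw_mk hlt] at hs
    rw [mem_segs_poly1 hs]
    exact mseg S hm (hM _ _ ha hlt)
  refine ⟨D, ⟨?_, ?_, ?_⟩, ⟨fun v => vpos_grid S hm (hle v), ?_⟩, ?_, ?_⟩
  · intro i
    fin_cases i
    · exact planW
    · rintro e he e' he' hne z ⟨hz, hz'⟩
      exact (planM e he e' he' hne z hz hz').elim
  · intro i e he j e' he' hne s hs t ht
    fin_cases i <;> fin_cases j
    · have hne : e ≠ e' := by simpa using hne
      rintro z ⟨z1, z2⟩ w ⟨w1, w2⟩
      obtain ⟨a, a1, a2, rfl⟩ := planW e he e' he' hne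
        ⟨seg_subset_curve hs z1, seg_subset_curve ht z2⟩
      obtain ⟨b, b1, b2, rfl⟩ := planW e he e' he' hne
        ⟨seg_subset_curve hs w1, seg_subset_curve ht w2⟩
      by_contra hab
      have hab : a ≠ b := fun h => hab (by rw [h])
      exact hne (((Sym2.mem_and_mem_iff hab).1 ⟨a1, b1⟩).trans
        ((Sym2.mem_and_mem_iff hab).1 ⟨a2, b2⟩).symm)
    · exact wm_overlap C (segW e he s hs) (segM e' he' t ht)
    · rw [Set.inter_comm]
      exact wm_overlap C (segW e' he' t ht) (segM e he s hs)
    · have hne : e ≠ e' := by simpa using hne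
      rintro z ⟨z1, z2⟩
      exact (planM e he e' he' hne z (seg_subset_curve hs z1) (seg_subset_curve ht z2)).elim
  · intro i j hij e he e' he' s hs t ht hc
    fin_cases i <;> fin_cases j
    · exact absurd rfl hij
    · exact wm_perp C (segW e he s hs) (segM e' he' t ht) hc
    · have h : SegPerp t s := wm_perp C (segW e' he' t ht) (segM e he s hs) (by
        unfold SegCross at hc ⊢
        rwa [Set.inter_comm])
      unfold SegPerp at h ⊢
      linarith
    · exact absurd rfl hij
  · intro i e he
    fin_cases i
    · change ∀ k : Fin ((wdraw m σ idx e).n + 1), OnGridPt _ _ ((wdraw m σ idx e).pts k)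
      obtain ⟨u, v, rfl, ha, hlt⟩ := edge_ordered hinj W he
      rw [wdraw_mk hlt]
      exact wpoly_grid S hm (hW _ _ ha hlt)
    · change ∀ k : Fin ((mdraw m σ idx e).n + 1), OnGridPt _ _ ((mdraw m σ idx e).pts k)
      obtain ⟨u, v, rfl, ha, hlt⟩ := edge_ordered hinj M he
      rw [mdraw_mk hlt]
      intro k
      change Fin 2 at k
      fin_cases k
      · exact vpos_grid S hm (hle u)
      · exact vpos_grid S hm (hle v)
  · intro e he
    change (wdraw m σ idx e).n ≤ 3
    obtain ⟨u, v, rfl, ha, hlt⟩ := edge_ordered hinj W he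
    rw [wdraw_mk hlt]
    exact wpoly_n ..
  · intro e he
    change (mdraw m σ idx e).n = 1
    obtain ⟨u, v, rfl, ha, hlt⟩ := edge_ordered hinj M he
    rw [mdraw_mk hlt]
    rfl

end

/-! ### Indices and mates -/

/-- Rotated index: the center keeps index `0`, rim vertex `k` gets index `1`. -/
def rotIdx (m k j : ℕ) : ℕ := if j = 0 then 0 else if k ≤ j then j - k + 1 else j + m - k + 1

open Classical in
/-- The partner of a vertex in a matching (the vertex itself if unmatched). -/
noncomputable def mateV {V : Type} (M : SimpleGraph V) (v : V) : V :=
  if h : ∃ w, M.Adj v w then h.choose else v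

section
variable {V : Type} [Fintype V] {M : SimpleGraph V}

lemma matching_unique (hM : IsMatchingGraph M) {u v w : V} (h : M.Adj u v) (h' : M.Adj u w) :
    v = w := by
  have := hM u
  unfold vdeg at this
  rw [Set.ncard_le_one (Set.toFinite _)] at this
  exact this v h w h'

lemma mateV_adj (hM : IsMatchingGraph M) {u v : V} (h : M.Adj u v) : mateV M u = v := by
  have hex : ∃ w, M.Adj u w := ⟨v, h⟩
  unfold mateV
  rw [dif_pos hex]
  exact matching_unique hM hex.choose_spec h

lemma mateV_cases (u : V) : M.Adj u (mateV M u) ∨ mateV M u = u := by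
  unfold mateV
  split_ifs with h
  · exact Or.inl h.choose_spec
  · exact Or.inr rfl

lemma mateV_inv (hM : IsMatchingGraph M) (u : V) : mateV M (mateV M u) = u := by
  rcases mateV_cases (M := M) u with h | h
  · exact mateV_adj hM h.symm
  · rw [h, h]

end

theorem racsim_wheel_matching {V : Type} [Fintype V] (n : ℕ)
    (hcard : Fintype.card V = n) (hn : 4 ≤ n) (W M : SimpleGraph V)
    (hW : IsWheel n W) (hM : IsMatchingGraph M) :
    ∃ D : SimDrawing ![W, M], D.IsRacSim ∧
      D.OnGrid (((3 * n / 2 : ℕ) : ℤ) - 1) ((n : ℤ) + 2) ∧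
      D.BendsAtMost 0 2 ∧
      ∀ e ∈ M.edgeSet, (D.poly 1 e).n = 1 := by
  obtain ⟨m, rfl⟩ : ∃ m, n = m + 1 := ⟨n - 1, by omega⟩
  have hm : 3 ≤ m := by omega
  obtain ⟨f, hf⟩ := hW
  -- choose which rim vertex comes first
  obtain ⟨k, hk1, hkm, hk⟩ : ∃ k, 1 ≤ k ∧ k ≤ m ∧
      ∀ w, M.Adj (f 0) w → (f.symm w).val = k := by
    by_cases h : ∃ w, M.Adj (f 0) w
    · obtain ⟨w, hw⟩ := h
      refine ⟨(f.symm w).val, ?_, by omega, ?_⟩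
      · by_contra h0
        have : f.symm w = 0 := Fin.ext (by rw [Fin.val_zero]; omega)
        have : w = f 0 := by rw [← this]; simp
        exact hw.ne this.symm
      · intro w' hw'
        rw [matching_unique hM hw' hw]
    · exact ⟨1, le_rfl, by omega, fun w hw => absurd ⟨w, hw⟩ h⟩
  let idx : V → ℕ := fun v => rotIdx m k (f.symm v).val
  have hinj : Function.Injective idx := by
    intro u v h
    apply f.symm.injective
    apply Fin.ext
    have h1 := (f.symm u).isLt
    have h2 := (f.symm v).isLt
    simp only [idx, rotIdx] at h
    split_ifs at h <;> omega
  have hle : ∀ v, idx v ≤ m := by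
    intro v
    have h1 := (f.symm v).isLt
    simp only [idx, rotIdx]
    split_ifs <;> omega
  have hidx0 : ∀ v, idx v = 0 → v = f 0 := by
    intro v h
    have : f.symm v = 0 := by
      apply Fin.ext
      simp only [idx, rotIdx] at h
      split_ifs at h with h'
      simpa using h'
    rw [← this]; simp
  let σ : ℕ → ℕ := Function.extend idx (fun v => idx (mateV M v)) id
  have hσ : ∀ v, σ (idx v) = idx (mateV M v) := fun v => hinj.extend_apply _ _ v
  have hσ' : ∀ i, (¬ ∃ v, idx v = i) → σ i = i := fun i h => Function.extend_apply' _ _ _ h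
  have S : Mate m σ := by
    refine ⟨?_, ?_, ?_⟩
    · intro i hi
      by_cases h : ∃ v, idx v = i
      · obtain ⟨v, rfl⟩ := h
        rw [hσ]; exact hle _
      · rw [hσ' i h]; exact hi
    · intro i hi
      by_cases h : ∃ v, idx v = i
      · obtain ⟨v, rfl⟩ := h
        rw [hσ, hσ, mateV_inv hM]
      · rw [hσ' i h, hσ' i h]
    · intro i h1 hi h0
      by_cases h : ∃ v, idx v = i
      · obtain ⟨v, rfl⟩ := h
        rw [hσ] at h0
        have e := hidx0 _ h0
        rcases mateV_cases (M := M) v with h | h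
        · rw [e] at h
          have := hk v h.symm
          simp only [idx, rotIdx]
          rw [this, if_neg (by omega), if_pos le_rfl]
          omega
        · rw [h] at h0; omega
      · rw [hσ' i h] at h0; omega
  have res := draw_exists (W := W) (M := M) (idx := idx) S hm hinj hle ?_ ?_
  · obtain ⟨D, h1, h2, h3⟩ := res
    refine ⟨D, h1, ?_, h3⟩
    have e : (((m + 1 : ℕ) : ℤ) + 2) = (m : ℤ) + 3 := by push_cast; ring
    rw [e]
    exact h2
  · intro u v huv hlt
    have h := (hf (f.symm u) (f.symm v)).1 (by simpa using huv)
    have h1 := (f.symm u).isLt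
    have h2 := (f.symm v).isLt
    unfold RimAdj at h
    simp only [idx] at hlt ⊢
    generalize (f.symm u).val = a at *
    generalize (f.symm v).val = b at *
    unfold WE
    unfold rotIdx at hlt ⊢
    split_ifs at hlt ⊢ <;> omega
  · intro u v huv hlt
    refine ⟨hlt, hle v, ?_, ?_⟩
    · rw [hσ, mateV_adj hM huv]
    · rw [hσ, mateV_adj hM huv.symm]
end

section
/- For every outerpath Z=(V,E_Z) on n ≥ 4 vertices and every matching M=(V,E_M) on the same vertex set V, there exists a RacSim drawing of Z and M on an integer grid of size (3n−2)×(3n−2) in which every edge of the outerpath is drawn with at most two bends and every edge of the matching is drawn with at most one bend. -/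
open SimpleGraph

/-- Adjacency along the Hamiltonian cycle `0 → 1 → ⋯ → (n-1) → 0` on `Fin n`. -/
def CycAdj (n : ℕ) (a b : Fin n) : Prop :=
  b.val = (a.val + 1) % n ∨ a.val = (b.val + 1) % n

/-- The cyclic position of `x` relative to `a` on `Fin n`. -/
def RelPos (n : ℕ) (a x : Fin n) : ℕ := (x.val + n - a.val) % n

/-- `x` lies strictly between `a` and `b` in the cyclic order of `Fin n`. -/
def CyclicBtw (n : ℕ) (a x b : Fin n) : Prop :=
  RelPos n a x ≠ 0 ∧ RelPos n a x < RelPos n a b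

/-- Chords `{a, b}` and `{c, d}` (with pairwise distinct endpoints) cross: exactly
one of `c`, `d` lies strictly between `a` and `b` in the cyclic order. -/
def ChordsCross (n : ℕ) (a b c d : Fin n) : Prop :=
  (CyclicBtw n a c b ∧ ¬CyclicBtw n a d b) ∨ (CyclicBtw n a d b ∧ ¬CyclicBtw n a c b)

/-- A maximal outerpath on `Fin n`: the edge set consists of the Hamiltonian cycle
`0 → 1 → ⋯ → (n-1) → 0` together with `n - 3` chords (so `2n - 3` edges in total)
that are pairwise noncrossing with respect to the cyclic order (a triangulated
polygon), and there are exactly two vertices of degree 2. -/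
def IsMaximalOuterpath {n : ℕ} (H : SimpleGraph (Fin n)) : Prop :=
  (∀ a b : Fin n, a ≠ b → CycAdj n a b → H.Adj a b) ∧
  H.edgeSet.ncard = 2 * n - 3 ∧
  (∀ a b c d : Fin n, H.Adj a b → H.Adj c d → ¬CycAdj n a b → ¬CycAdj n c d →
    a ≠ c → a ≠ d → b ≠ c → b ≠ d → ¬ChordsCross n a b c d) ∧
  {v : Fin n | vdeg H v = 2}.ncard = 2

/-- An outerpath on a vertex set `V` of `n` vertices: a spanning subgraph of a
maximal outerpath, under some labeling of the vertices by `Fin n`. -/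
def IsOuterpath {V : Type} (n : ℕ) (Z : SimpleGraph V) : Prop :=
  ∃ (f : Fin n ≃ V) (H : SimpleGraph (Fin n)), IsMaximalOuterpath H ∧
    ∀ a b : Fin n, Z.Adj (f a) (f b) → H.Adj a b

/-! ### Combinatorial part: a maximal outerpath is a strip -/

theorem relPos_eq (n : ℕ) (a x : Fin n) :
    RelPos n a x = if a.val ≤ x.val then x.val - a.val else x.val + n - a.val := by
  unfold RelPos
  have ha := a.isLt
  have hx := x.isLt
  split_ifs with h
  · have : x.val + n - a.val = (x.val - a.val) + n := by omega
    rw [this, Nat.add_mod_right, Nat.mod_eq_of_lt (by omega)]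
  · rw [Nat.mod_eq_of_lt (by omega)]

theorem succ_mod_eq (n : ℕ) (a : Fin n) :
    (a.val + 1) % n = if a.val + 1 = n then 0 else a.val + 1 := by
  have ha := a.isLt
  split_ifs with h
  · rw [h, Nat.mod_self]
  · rw [Nat.mod_eq_of_lt (by omega)]

/-- Relative positions with respect to `a`, computed from those with respect to `p`. -/
theorem relPos_shift (n : ℕ) (p a x : Fin n) :
    RelPos n a x = if RelPos n p a ≤ RelPos n p x then RelPos n p x - RelPos n p a
      else RelPos n p x + n - RelPos n p a := by
  have ha := a.isLt
  have hx := x.isLt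
  have hp := p.isLt
  simp only [relPos_eq]
  split_ifs <;> omega

theorem relPos_lt (n : ℕ) (p a : Fin n) : RelPos n p a < n := by
  have ha := a.isLt
  have hp := p.isLt
  simp only [relPos_eq]
  split_ifs <;> omega

theorem relPos_inj (n : ℕ) (p a b : Fin n) (h : RelPos n p a = RelPos n p b) : a = b := by
  have ha := a.isLt
  have hb := b.isLt
  have hp := p.isLt
  simp only [relPos_eq] at h
  apply Fin.ext
  split_ifs at h <;> omega

theorem relPos_self (n : ℕ) (p : Fin n) : RelPos n p p = 0 := by
  simp [relPos_eq]

theorem cycAdj_shift (n : ℕ) (p a b : Fin n) (h : CycAdj n a b) :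
    RelPos n p b = RelPos n p a + 1 ∨ RelPos n p a = RelPos n p b + 1 ∨
    (RelPos n p a + 1 = n ∧ RelPos n p b = 0) ∨ (RelPos n p b + 1 = n ∧ RelPos n p a = 0) := by
  have ha := a.isLt
  have hb := b.isLt
  have hp := p.isLt
  unfold CycAdj at h
  rw [succ_mod_eq, succ_mod_eq] at h
  simp only [relPos_eq]
  split_ifs at h ⊢ <;> omega

theorem cycAdj_of_rel (n : ℕ) (p a b : Fin n) (h : RelPos n p b = RelPos n p a + 1) :
    CycAdj n a b := by
  have ha := a.isLt
  have hb := b.isLt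
  have hp := p.isLt
  unfold CycAdj
  rw [succ_mod_eq, succ_mod_eq]
  simp only [relPos_eq] at h
  split_ifs at h ⊢ <;> omega

/-- A vertex with no chord has degree two. -/
theorem vdeg_two {n : ℕ} (hn : 4 ≤ n) (H : SimpleGraph (Fin n))
    (hc : ∀ a b : Fin n, a ≠ b → CycAdj n a b → H.Adj a b) (w : Fin n)
    (hw : ∀ d, H.Adj w d → CycAdj n w d) : vdeg H w = 2 := by
  have hwl := w.isLt
  let x : Fin n := ⟨(w.val + 1) % n, Nat.mod_lt _ (by omega)⟩
  let y : Fin n := ⟨if w.val = 0 then n - 1 else w.val - 1, by split_ifs <;> omega⟩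
  have hx : x.val = if w.val + 1 = n then 0 else w.val + 1 := succ_mod_eq n w
  have hy : y.val = if w.val = 0 then n - 1 else w.val - 1 := rfl
  have hyc : w.val = (y.val + 1) % n := by
    rw [succ_mod_eq, hy]
    split_ifs <;> omega
  have hset : H.neighborSet w = {x, y} := by
    ext d
    simp only [SimpleGraph.mem_neighborSet, Set.mem_insert_iff, Set.mem_singleton_iff]
    constructor
    · intro h
      rcases hw d h with h1 | h1
      · left; exact Fin.ext h1
      · right
        apply Fin.ext
        have hd := d.isLt
        rw [succ_mod_eq] at h1
        rw [hy]
        split_ifs at h1 ⊢ <;> omega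
    · rintro (rfl | rfl)
      · apply hc
        · intro h
          have := congrArg Fin.val h
          rw [hx] at this
          split_ifs at this <;> omega
        · left; rfl
      · apply hc
        · intro h
          have := congrArg Fin.val h
          rw [hy] at this
          split_ifs at this <;> omega
        · right; exact hyc
  unfold vdeg
  rw [hset, Set.ncard_pair]
  intro h
  have := congrArg Fin.val h
  rw [hx, hy] at this
  split_ifs at this <;> omega

/-- Every open arc cut off by a chord contains a vertex of degree two. -/
theorem ear_lemma {n : ℕ} (hn : 4 ≤ n) (H : SimpleGraph (Fin n))
    (hc : ∀ a b : Fin n, a ≠ b → CycAdj n a b → H.Adj a b)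
    (hx : ∀ a b c d : Fin n, H.Adj a b → H.Adj c d → ¬CycAdj n a b → ¬CycAdj n c d →
      a ≠ c → a ≠ d → b ≠ c → b ≠ d → ¬ChordsCross n a b c d) :
    ∀ (L : ℕ) (a b : Fin n), RelPos n a b ≤ L → H.Adj a b → ¬CycAdj n a b →
      ∃ w, CyclicBtw n a w b ∧ vdeg H w = 2 := by
  intro L
  induction L with
  | zero =>
    intro a b hl hab _
    exact absurd (relPos_inj n a a b (by rw [relPos_self]; omega)) hab.ne
  | succ L ih =>
    intro a b hl hab hnc
    by_cases hch : ∃ w d, CyclicBtw n a w b ∧ H.Adj w d ∧ ¬CycAdj n w d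
    · obtain ⟨w, d, hw, hwd, hwdc⟩ := hch
      have hwd' := hwd.ne
      have hcl : RelPos n a d ≤ RelPos n a b := by
        by_contra hcon
        refine hx a b w d hab hwd hnc hwdc ?_ ?_ ?_ ?_ (Or.inl ⟨hw, fun h => ?_⟩)
        · rintro rfl; exact hw.1 (relPos_self n a)
        · rintro rfl; rw [relPos_self] at hcon; omega
        · rintro rfl; exact absurd hw.2 (lt_irrefl _)
        · rintro rfl; exact hcon le_rfl
        · exact hcon h.2.le
      have hne : RelPos n a w ≠ RelPos n a d := fun h => hwd' (relPos_inj n a w d h)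
      obtain ⟨hw1, hw2⟩ := hw
      have hbl := relPos_lt n a b
      rcases Nat.lt_or_gt_of_ne hne with h | h
      · have h1 := relPos_shift n a w d
        rw [if_pos h.le] at h1
        obtain ⟨z, hz, hz2⟩ := ih w d (by omega) hwd hwdc
        refine ⟨z, ?_, hz2⟩
        unfold CyclicBtw at hz ⊢
        have h2 := relPos_shift n a w z
        have h3 := relPos_lt n a z
        split_ifs at h2 <;> omega
      · have h1 := relPos_shift n a d w
        rw [if_pos h.le] at h1
        obtain ⟨z, hz, hz2⟩ := ih d w (by omega) hwd.symm (fun hh => hwdc hh.symm)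
        refine ⟨z, ?_, hz2⟩
        unfold CyclicBtw at hz ⊢
        have h2 := relPos_shift n a d z
        have h3 := relPos_lt n a z
        split_ifs at h2 <;> omega
    · push Not at hch
      have hb0 : RelPos n a b ≠ 0 := fun h =>
        hab.ne (relPos_inj n a a b (by rw [relPos_self]; omega))
      have hb1 : RelPos n a b ≠ 1 := fun h =>
        hnc (cycAdj_of_rel n a a b (by rw [relPos_self]; omega))
      let w : Fin n := ⟨(a.val + 1) % n, Nat.mod_lt _ (by omega)⟩
      have hw : RelPos n a w = 1 := by
        have h1 : w.val = if a.val + 1 = n then 0 else a.val + 1 := succ_mod_eq n a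
        have ha := a.isLt
        rw [relPos_eq, h1]
        split_ifs <;> omega
      have hwb : CyclicBtw n a w b := ⟨by omega, by omega⟩
      exact ⟨w, hwb, vdeg_two hn H hc w (fun d hd => hch w d hwb hd)⟩

/-- A maximal outerpath has a linear order (given by `K`) and a two-coloring `side` such that
each edge joins a vertex to the latest preceding vertex of one of the sides. -/
theorem strip_order {n : ℕ} (hn : 4 ≤ n) (H : SimpleGraph (Fin n)) (hH : IsMaximalOuterpath H) :
    ∃ (K : Fin n → ℕ) (side : Fin n → Bool), Function.Injective K ∧
      (∀ c, ∃ v, side v = c) ∧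
      ∀ a b, H.Adj a b → K a < K b → ∀ w, K a < K w → K w < K b → side w ≠ side a := by
  classical
  obtain ⟨hc, -, hx, h2⟩ := hH
  obtain ⟨p, q, hpq, hS, hk⟩ : ∃ p q : Fin n, p ≠ q ∧ (∀ v, vdeg H v = 2 → v = p ∨ v = q) ∧
      RelPos n p q + 2 ≤ n := by
    obtain ⟨p, q, hpq, hS⟩ := Set.ncard_eq_two.mp h2
    have hS' : ∀ v, vdeg H v = 2 → v = p ∨ v = q := by
      intro v hv
      have : v ∈ {v : Fin n | vdeg H v = 2} := hv
      rw [hS] at this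
      simpa using this
    by_cases hk : RelPos n p q + 2 ≤ n
    · exact ⟨p, q, hpq, hS', hk⟩
    · refine ⟨q, p, hpq.symm, fun v hv => (hS' v hv).symm, ?_⟩
      have h1 := relPos_shift n p q p
      have h3 := relPos_lt n p q
      rw [relPos_self] at h1
      split_ifs at h1 <;> omega
  have hk1 : RelPos n p q ≠ 0 := fun h => hpq (relPos_inj n p p q (by rw [relPos_self]; omega))
  set i : Fin n → ℕ := RelPos n p with hi
  have hil : ∀ x, i x < n := relPos_lt n p
  have hii : ∀ x y, i x = i y → x = y := relPos_inj n p
  set k := i q with hkdef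
  -- chords separate `p` and `q`
  have hsep : ∀ a b, H.Adj a b → ¬CycAdj n a b → i a < i b → 0 < i a ∧ i a < k ∧ k < i b := by
    intro a b hab hnc hlt
    obtain ⟨w, hw, hw2⟩ := ear_lemma hn H hc hx _ a b le_rfl hab hnc
    obtain ⟨z, hz, hz2⟩ := ear_lemma hn H hc hx _ b a le_rfl hab.symm (fun h => hnc h.symm)
    unfold CyclicBtw at hw hz
    have e1 := relPos_shift n p a w
    have e2 := relPos_shift n p a b
    have e3 := relPos_shift n p b z
    have e4 := relPos_shift n p b a
    have hp0 : i p = 0 := relPos_self n p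
    have l1 := hil w
    have l2 := hil z
    have l3 := hil a
    have l4 := hil b
    simp only [← hi] at e1 e2 e3 e4 
    rcases hS w hw2 with rfl | rfl <;> rcases hS z hz2 with rfl | rfl <;>
      split_ifs at e1 e2 e3 e4 <;> omega
  have hcyc : ∀ a b, CycAdj n a b → i b = i a + 1 ∨ i a = i b + 1 ∨
    (i a + 1 = n ∧ i b = 0) ∨ (i b + 1 = n ∧ i a = 0) := fun a b h => cycAdj_shift n p a b h
  -- edges inside a side
  have hin : ∀ a b, H.Adj a b → i a < i b → (i a ≤ k ↔ i b ≤ k) → i b = i a + 1 := by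
    intro a b hab hlt hs
    by_cases hcy : CycAdj n a b
    · have := hcyc a b hcy
      have := hil b
      omega
    · have := hsep a b hab hcy hlt
      omega
  -- cross edges are monotone
  have hmono : ∀ a b a' b', H.Adj a b → H.Adj a' b' → i a ≤ k → k < i b → i a' ≤ k → k < i b' →
      i a < i a' → i b' ≤ i b := by
    intro a b a' b' hab hab' ha hb ha' hb' hlt
    have l1 := hil b
    have l2 := hil b'
    by_cases hcy : CycAdj n a b
    · have := hcyc a b hcy
      omega
    by_cases hcy' : CycAdj n a' b'
    · have := hcyc a' b' hcy'
      omega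
    by_contra hcon
    refine hx a b a' b' hab hab' hcy hcy' ?_ ?_ ?_ ?_ (Or.inl ⟨?_, ?_⟩)
    · rintro rfl; omega
    · rintro rfl; omega
    · rintro rfl; omega
    · rintro rfl; omega
    · have e1 := relPos_shift n p a a'
      have e2 := relPos_shift n p a b
      simp only [← hi] at e1 e2
      unfold CyclicBtw
      split_ifs at e1 e2 <;> omega
    · have e1 := relPos_shift n p a b'
      have e2 := relPos_shift n p a b
      simp only [← hi] at e1 e2
      unfold CyclicBtw
      split_ifs at e1 e2 <;> omega
  let F : Fin n → Finset (Fin n) := fun x =>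
    Finset.univ.filter (fun y => k < i y ∧ ∃ x', i x' ≤ k ∧ i x' < i x ∧ H.Adj x' y)
  let g : Fin n → ℕ := fun x => (F x).sup (fun y => n - i y)
  have hg_mono : ∀ x y, i x ≤ i y → g x ≤ g y := by
    intro x y hxy
    apply Finset.sup_mono
    intro z hz
    simp only [F, Finset.mem_filter, Finset.mem_univ, true_and] at hz ⊢
    obtain ⟨h1, x', h3, h4, h5⟩ := hz
    exact ⟨h1, x', h3, by omega, h5⟩
  have hg_ge : ∀ x x' y, i x' ≤ k → i x' < i x → k < i y → H.Adj x' y → n - i y ≤ g x := by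
    intro x x' y h1 h2 h3 h4
    apply Finset.le_sup (f := fun y => n - i y)
    simp only [F, Finset.mem_filter, Finset.mem_univ, true_and]
    exact ⟨h3, x', h1, h2, h4⟩
  have hg_le : ∀ x m, 0 < m → m ≤ g x → ∃ x' y, i x' ≤ k ∧ i x' < i x ∧ k < i y ∧ H.Adj x' y ∧
      m ≤ n - i y := by
    intro x m hm hmg
    rw [Finset.le_sup_iff (by simpa using hm)] at hmg
    obtain ⟨y, hy, hy2⟩ := hmg
    simp only [F, Finset.mem_filter, Finset.mem_univ, true_and] at hy
    obtain ⟨h1, x', h3, h4, h5⟩ := hy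
    exact ⟨x', y, h3, h4, h1, h5, hy2⟩
  let K : Fin n → ℕ := fun x => if i x ≤ k then g x * (n + 1) + 1 + i x else (n - i x) * (n + 1)
  have hKA : ∀ x, i x ≤ k → K x = g x * (n + 1) + 1 + i x := fun x h => if_pos h
  have hKB : ∀ x, k < i x → K x = (n - i x) * (n + 1) := fun x h => if_neg (by omega)
  -- comparisons
  have hAA : ∀ x y, i x ≤ k → i y ≤ k → i x < i y → K x < K y := by
    intro x y h1 h2 h3
    rw [hKA x h1, hKA y h2]
    have := Nat.mul_le_mul_right (n + 1) (hg_mono x y h3.le)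
    omega
  have hBB : ∀ x y, k < i x → k < i y → i x < i y → K y < K x := by
    intro x y h1 h2 h3
    rw [hKB x h1, hKB y h2]
    have := hil y
    exact Nat.mul_lt_mul_of_pos_right (by omega) (by omega)
  have hBA : ∀ x y, i x ≤ k → k < i y → n - i y ≤ g x → K y < K x := by
    intro x y h1 h2 h3
    rw [hKA x h1, hKB y h2]
    have := Nat.mul_le_mul_right (n + 1) h3
    omega
  have hAB : ∀ x y, i x ≤ k → k < i y → g x < n - i y → K x < K y := by
    intro x y h1 h2 h3
    rw [hKA x h1, hKB y h2]
    have h4 := Nat.mul_le_mul_right (n + 1) (Nat.succ_le_of_lt h3)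
    have := hil x
    rw [Nat.succ_mul] at h4
    omega
  refine ⟨K, fun x => decide (i x ≤ k), ?_, ?_, ?_⟩
  · intro x y hxy
    by_contra hne
    have hne' : i x ≠ i y := fun h => hne (hii x y h)
    by_cases h1 : i x ≤ k <;> by_cases h2 : i y ≤ k
    · rcases Nat.lt_or_gt_of_ne hne' with h | h
      · exact absurd hxy (hAA x y h1 h2 h).ne
      · exact absurd hxy (hAA y x h2 h1 h).ne'
    · push Not at h2
      rcases Nat.lt_or_ge (g x) (n - i y) with h | h
      · exact absurd hxy (hAB x y h1 h2 h).ne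
      · exact absurd hxy (hBA x y h1 h2 h).ne'
    · push Not at h1
      rcases Nat.lt_or_ge (g y) (n - i x) with h | h
      · exact absurd hxy (hAB y x h2 h1 h).ne'
      · exact absurd hxy (hBA y x h2 h1 h).ne
    · push Not at h1 h2
      rcases Nat.lt_or_gt_of_ne hne' with h | h
      · exact absurd hxy (hBB x y h1 h2 h).ne'
      · exact absurd hxy (hBB y x h2 h1 h).ne
  · intro c
    cases c
    · let y : Fin n := ⟨if p.val = 0 then n - 1 else p.val - 1, by split_ifs <;> omega⟩
      have hy : y.val = if p.val = 0 then n - 1 else p.val - 1 := rfl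
      have hyi : i y = n - 1 := by
        have hp := p.isLt
        simp only [hi, relPos_eq, hy]
        split_ifs <;> omega
      exact ⟨y, by simp only [decide_eq_false_iff_not]; omega⟩
    · exact ⟨q, by simp [hkdef]⟩
  · intro a b hab hlt w h1 h2 hs
    have hs' : i w ≤ k ↔ i a ≤ k := by simpa using hs
    have hab' : i a ≠ i b := fun h => hab.ne (hii a b h)
    have haw : i a ≠ i w := fun h => by rw [hii a w h] at h1; exact lt_irrefl _ h1
    have hwb : i w ≠ i b := fun h => by rw [hii w b h] at h2; exact lt_irrefl _ h2
    by_cases ha : i a ≤ k <;> by_cases hb : i b ≤ k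
    · have hw := hs'.mpr ha
      have e1 : i a < i b := by
        by_contra h
        have := hAA b a hb ha (by omega); omega
      have e2 : i a < i w := by
        by_contra h
        have := hAA w a hw ha (by omega); omega
      have e3 : i w < i b := by
        by_contra h
        have := hAA b w hb hw (by omega); omega
      have := hin a b hab e1 (by omega)
      omega
    · have hw := hs'.mpr ha
      push Not at hb
      have e2 : i a < i w := by
        by_contra h
        have := hAA w a hw ha (by omega); omega
      have := hBA w b hw hb (hg_ge w a b ha e2 hb hab)
      omega
    · have hw : k < i w := by omega
      push Not at ha
      have e2 : i w < i a := by
        by_contra h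
        have := hBB a w ha hw (by omega); omega
      have e3 : n - i w ≤ g b := by
        by_contra h
        have := hAB b w hb hw (by omega); omega
      have := hil w
      obtain ⟨x', y, f1, f2, f3, f4, f5⟩ := hg_le b (n - i w) (by omega) e3
      have := hmono x' y b a f4 hab.symm f1 f3 hb ha f2
      have := hil y
      have := hil a
      omega
    · have hw : k < i w := by omega
      push Not at ha hb
      have e1 : i b < i a := by
        by_contra h
        have := hBB a b ha hb (by omega); omega
      have e2 : i w < i a := by
        by_contra h
        have := hBB a w ha hw (by omega); omega
      have e3 : i b < i w := by
        by_contra h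
        have := hBB w b hw hb (by omega); omega
      have := hin b a hab.symm e1 (by omega)
      omega

/-! ### Geometric part: the drawing -/

/-- The coordinates used by the drawing. `K` is the linear order of the strip, `side` the side of a
vertex, `u c v` the column (for `c = true`) or row (for `c = false`) belonging to `v`, `D v` the
depth of `v`, and `key` enumerates the classes of the matching. -/
structure Layout (V : Type) where
  K : V → ℕ
  side : V → Bool
  u : Bool → V → ℤ
  D : V → ℤ
  N : ℤ
  key : V → ℕ
  K_inj : Function.Injective K
  u_lt : ∀ c s t, K s < K t → u c s + 1 ≤ u c t
  u_gap : ∀ s t, side s = side t → K s < K t → ∀ r, K r < K t →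
    u (side t) r + 2 ≤ u (side t) t
  D_gt : ∀ v w, u (!side v) w + 1 ≤ D v
  D_eq : ∀ v w, side v = side w → key v = key w → D v = D w
  D_lt : ∀ v w, side v = side w → key v < key w → D v + 2 ≤ D w
  u_pos : ∀ c v, 1 ≤ u c v
  D_le : ∀ v, D v + 1 ≤ N
  u_le_N : ∀ c v, u c v ≤ N

namespace Layout

variable {V : Type} (L : Layout V)

/-- Coordinate in direction `c`. -/
def q (c : Bool) (p : ℝ × ℝ) : ℝ := match c with
  | true => p.1
  | false => L.N + 1 - p.2

/-- The point with coordinate `a` in direction `c` and `b` in direction `!c`. -/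
def pt (c : Bool) (a b : ℤ) : ℝ × ℝ := match c with
  | true => ((a : ℝ), L.N + 1 - b)
  | false => ((b : ℝ), L.N + 1 - a)

@[simp] theorem q_pt (c : Bool) (a b : ℤ) : L.q c (L.pt c a b) = a := by
  cases c <;> simp [q, pt]

@[simp] theorem q_pt' (c : Bool) (a b : ℤ) : L.q (!c) (L.pt c a b) = b := by
  cases c <;> simp [q, pt]

theorem pt_swap (c : Bool) (a b : ℤ) : L.pt (!c) a b = L.pt c b a := by
  cases c <;> simp [pt]

theorem q_ext (c : Bool) (p p' : ℝ × ℝ) (h : L.q c p = L.q c p')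
    (h' : L.q (!c) p = L.q (!c) p') : p = p' := by
  cases c <;> simp [q] at h h' <;> exact Prod.ext (by assumption) (by assumption)

theorem q_seg (c : Bool) (P Q : ℝ × ℝ) (θ : ℝ) :
    L.q c (P + θ • (Q - P)) = L.q c P + θ * (L.q c Q - L.q c P) := by
  cases c <;> simp [q] ; ring

/-- Position of a vertex. -/
def pos (v : V) : ℝ × ℝ := L.pt (L.side v) (L.u (L.side v) v) (L.D v)

theorem eq_pos (v : V) (z : ℝ × ℝ) (h : L.q (L.side v) z = L.u (L.side v) v)
    (h' : L.q (!L.side v) z = L.D v) : z = L.pos v := by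
  apply L.q_ext (L.side v) <;> simp [pos, h, h']

theorem u_inj (c : Bool) (s t : V) (h : L.u c s = L.u c t) : s = t := by
  apply L.K_inj
  rcases lt_trichotomy (L.K s) (L.K t) with h1 | h1 | h1
  · have := L.u_lt c s t h1; omega
  · exact h1
  · have := L.u_lt c t s h1; omega

theorem u_le (c : Bool) (s t : V) (h : L.K s ≤ L.K t) : L.u c s ≤ L.u c t := by
  rcases h.lt_or_eq with h | h
  · have := L.u_lt c s t h; omega
  · rw [L.K_inj h]

theorem pos_injective : Function.Injective L.pos := by
  intro s t h
  have h1 := congrArg (L.q (L.side s)) h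
  have h2 := congrArg (L.q (!L.side s)) h
  by_cases hs : L.side t = L.side s
  · rw [pos, pos, hs] at h1
    simp only [q_pt] at h1
    exact L.u_inj (L.side s) s t (by exact_mod_cast h1)
  · have hs' : L.side t = !L.side s := by
      cases h3 : L.side t <;> cases h4 : L.side s <;> simp_all
    have hs2 : L.side s = !L.side t := by rw [hs']; simp
    rw [pos, pos] at h1
    rw [q_pt, hs2, q_pt'] at h1
    have := L.D_gt t s
    have h5 : L.u (!L.side t) s = L.D t := by exact_mod_cast h1
    omega

/-- Drawing of the outerpath edge with earlier endpoint `s` and later endpoint `t`. -/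
def zpts (s t : V) : Fin 4 → ℝ × ℝ :=
  if L.side s = L.side t then
    ![L.pos s, L.pt (L.side s) (L.u (L.side s) t - 1) (L.D s + 1),
      L.pt (L.side s) (L.u (L.side s) t - 1) (L.D t + 1), L.pos t]
  else
    ![L.pos s, L.pt (L.side s) (L.u (L.side s) t) (L.D s - 1),
      L.pt (L.side s) (L.u (L.side s) t) (L.u (L.side t) t), L.pos t]

def zpoly (s t : V) : Polyline := ⟨3, L.zpts s t⟩

/-- Drawing of the matching edge joining `v` and `w`. -/
def mpts (v w : V) : Fin 3 → ℝ × ℝ :=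
  if L.side v = L.side w then ![L.pos v, L.pos w, L.pos w]
  else ![L.pos v, L.pt (L.side v) (L.D w) (L.D v), L.pos w]

def mpoly (v w : V) : Polyline := ⟨2, L.mpts v w⟩

theorem seg_param {P Q z : ℝ × ℝ} (h : z ∈ segment ℝ P Q) :
    ∃ θ : ℝ, 0 ≤ θ ∧ θ ≤ 1 ∧ ∀ c, L.q c z = L.q c P + θ * (L.q c Q - L.q c P) := by
  rw [segment_eq_image'] at h
  obtain ⟨θ, hθ, rfl⟩ := h
  exact ⟨θ, hθ.1, hθ.2, fun c => L.q_seg c P Q θ⟩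

theorem openSeg_param {P Q z : ℝ × ℝ} (h : z ∈ openSegment ℝ P Q) :
    ∃ θ : ℝ, 0 < θ ∧ θ < 1 ∧ ∀ c, L.q c z = L.q c P + θ * (L.q c Q - L.q c P) := by
  rw [openSegment_eq_image'] at h
  obtain ⟨θ, hθ, rfl⟩ := h
  exact ⟨θ, hθ.1, hθ.2, fun c => L.q_seg c P Q θ⟩

/-- `s` is the latest vertex of its side before `t`. -/
def Lat (s t : V) : Prop :=
  L.K s < L.K t ∧ ∀ w, L.K s < L.K w → L.K w < L.K t → L.side w ≠ L.side s

variable {L}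

/-- Description of the curve of an edge between two different sides. -/
theorem curveO {s t : V} (hl : L.Lat s t) (c : Bool) (hs : L.side s = c) (ht : L.side t = !c)
    {z : ℝ × ℝ} (hz : z ∈ (L.zpoly s t).curve) :
    ((L.u c s : ℝ) ≤ L.q c z ∧ L.q c z ≤ L.u c t ∧ (L.D s : ℝ) - 1 ≤ L.q (!c) z ∧
      L.q (!c) z ≤ L.D s ∧
      ((L.D s : ℝ) - L.q (!c) z) * (L.u c t - L.u c s) = L.q c z - L.u c s) ∨
    (L.q c z = L.u c t ∧ (L.u (!c) t : ℝ) ≤ L.q (!c) z ∧ L.q (!c) z ≤ L.D s - 1) ∨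
    (L.q (!c) z = L.u (!c) t ∧ (L.u c t : ℝ) ≤ L.q c z ∧ L.q c z ≤ L.D t) := by
  have h1 : (L.u c s : ℝ) + 1 ≤ L.u c t := by exact_mod_cast L.u_lt c s t hl.1
  have h2 : (L.u (!c) t : ℝ) + 1 ≤ L.D s := by exact_mod_cast hs ▸ L.D_gt s t
  have h3 : (L.u c t : ℝ) + 1 ≤ L.D t := by
    have := L.D_gt t t
    rw [ht, Bool.not_not] at this
    exact_mod_cast this
  simp only [Polyline.curve, Set.mem_iUnion] at hz
  obtain ⟨i, hi⟩ := hz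
  have hne : ¬ (c = !c) := by cases c <;> simp
  have hpt : L.pos t = L.pt c (L.D t) (L.u (!c) t) := by rw [pos, ht, pt_swap]
  have hps : L.pos s = L.pt c (L.u c s) (L.D s) := by rw [pos, hs]
  simp only [zpoly] at i hi
  rw [zpts, hs, ht, if_neg hne, hpt, hps] at hi
  obtain ⟨θ, h0, h01, hq⟩ := L.seg_param hi
  have e1 := hq c
  have e2 := hq (!c)
  fin_cases i
  · left
    simp at e1 e2
    rw [e1, e2]
    refine ⟨by nlinarith, by nlinarith, by nlinarith, by nlinarith, by ring⟩
  · right; left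
    simp at e1 e2
    rw [e1, e2]
    refine ⟨by ring, by nlinarith, by nlinarith⟩
  · right; right
    simp at e1 e2
    rw [e1, e2]
    refine ⟨by ring, by nlinarith, by nlinarith⟩

/-- Description of the curve of an edge inside a side. -/
theorem curveS {s t : V} (hl : L.Lat s t) (c : Bool) (hs : L.side s = c) (ht : L.side t = c)
    {z : ℝ × ℝ} (hz : z ∈ (L.zpoly s t).curve) :
    (L.u c s : ℝ) ≤ L.q c z ∧ L.q c z ≤ L.u c t ∧
    (L.q c z = L.u c s → L.q (!c) z = L.D s) ∧
    (L.q c z = L.u c t → L.q (!c) z = L.D t) ∧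
    (L.q c z < L.u c t - 1 → (L.D s : ℝ) ≤ L.q (!c) z ∧
      (L.q (!c) z = L.D s → L.q c z = L.u c s)) ∧
    ∀ r, (L.u (!c) r : ℝ) < L.q (!c) z := by
  have h1 : (L.u c s : ℝ) + 2 ≤ L.u c t := by
    have := L.u_gap s t (hs.trans ht.symm) hl.1 s hl.1
    rw [ht] at this
    exact_mod_cast this
  have h2 : ∀ r, (L.u (!c) r : ℝ) + 1 ≤ L.D s := fun r => by exact_mod_cast hs ▸ L.D_gt s r
  have h3 : ∀ r, (L.u (!c) r : ℝ) + 1 ≤ L.D t := fun r => by exact_mod_cast ht ▸ L.D_gt t r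
  simp only [Polyline.curve, Set.mem_iUnion] at hz
  obtain ⟨i, hi⟩ := hz
  have hpt : L.pos t = L.pt c (L.u c t) (L.D t) := by rw [pos, ht]
  have hps : L.pos s = L.pt c (L.u c s) (L.D s) := by rw [pos, hs]
  simp only [zpoly] at i hi
  rw [zpts, hs, ht, if_pos rfl, hpt, hps] at hi
  obtain ⟨θ, h0, h01, hq⟩ := L.seg_param hi
  have e1 := hq c
  have e2 := hq (!c)
  fin_cases i
  · simp at e1 e2
    have hx : L.q c z ≤ L.u c t - 1 := by rw [e1]; nlinarith
    refine ⟨by rw [e1]; nlinarith, by linarith, ?_, fun h => by linarith, ?_, ?_⟩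
    · intro h
      have : θ * ((L.u c t : ℝ) - 1 - L.u c s) = 0 := by linarith
      rcases mul_eq_zero.mp this with h | h
      · rw [e2, h]; ring
      · linarith
    · intro h
      refine ⟨by rw [e2]; linarith, fun h' => ?_⟩
      have : θ = 0 := by linarith
      rw [e1, this]; ring
    · intro r
      have := h2 r
      linarith
  · simp at e1 e2
    refine ⟨by linarith, by linarith, fun h => by linarith, fun h => by linarith,
      fun h => by linarith, ?_⟩
    intro r
    have := h2 r
    have := h3 r
    rw [e2]
    nlinarith
  · simp at e1 e2
    refine ⟨by linarith, by linarith, fun h => by linarith, ?_, fun h => by linarith, ?_⟩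
    · intro h
      have : θ = 1 := by linarith
      rw [e2, this]; ring
    · intro r
      have := h3 r
      linarith

/-- Common endpoint conclusion. -/
def Common (L : Layout V) (s t s' t' : V) (z : ℝ × ℝ) : Prop :=
  ∃ v, (v = s ∨ v = t) ∧ (v = s' ∨ v = t') ∧ z = L.pos v

theorem Common.symm {s t s' t' : V} {z : ℝ × ℝ} (h : Common L s t s' t' z) :
    Common L s' t' s t z := by
  obtain ⟨v, h1, h2, h3⟩ := h
  exact ⟨v, h2, h1, h3⟩

theorem Lat.unique {s s' t : V} (h : L.Lat s t) (h' : L.Lat s' t) (hs : L.side s = L.side s') :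
    s = s' := by
  apply L.K_inj
  rcases lt_trichotomy (L.K s) (L.K s') with h1 | h1 | h1
  · exact absurd hs.symm (h.2 s' h1 h'.1)
  · exact h1
  · exact absurd hs (h'.2 s h1 h.1)

theorem planarSS {s t s' t' : V} (hl : L.Lat s t) (hl' : L.Lat s' t') (c : Bool)
    (hs : L.side s = c) (ht : L.side t = c) (hs' : L.side s' = c) (_ht' : L.side t' = c)
    (hlt : L.K t < L.K t') {z : ℝ × ℝ} (hz : z ∈ (L.zpoly s t).curve)
    (hz' : z ∈ (L.zpoly s' t').curve) : Common L s t s' t' z := by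
  obtain ⟨a1, a2, a3, a4, a5, a6⟩ := curveS hl c hs ht hz
  obtain ⟨b1, b2, b3, b4, b5, b6⟩ := curveS hl' c hs' _ht' hz'
  have hk : L.K t ≤ L.K s' := by
    by_contra h
    exact hl'.2 t (by omega) hlt (ht.trans hs'.symm)
  have h1 : (L.u c t : ℝ) ≤ L.u c s' := by exact_mod_cast L.u_le c t s' hk
  have h2 : (L.u c t : ℝ) = L.u c s' := by linarith
  have h3 : t = s' := L.u_inj c t s' (by exact_mod_cast h2)
  refine ⟨t, Or.inr rfl, Or.inl h3, L.eq_pos t z ?_ ?_⟩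
  · rw [ht]; linarith
  · rw [ht]; exact a4 (by linarith)

theorem planarSS' {s t s' t' : V} (hl : L.Lat s t) (hl' : L.Lat s' t') (c : Bool)
    (hs : L.side s = c) (ht : L.side t = c) (hs' : L.side s' = !c) (ht' : L.side t' = !c)
    {z : ℝ × ℝ} (hz : z ∈ (L.zpoly s t).curve)
    (hz' : z ∈ (L.zpoly s' t').curve) : False := by
  obtain ⟨a1, a2, a3, a4, a5, a6⟩ := curveS hl c hs ht hz
  obtain ⟨b1, b2, b3, b4, b5, b6⟩ := curveS hl' (!c) hs' ht' hz'
  have := a6 t'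
  linarith

theorem planarSO {s t s' t' : V} (hl : L.Lat s t) (hl' : L.Lat s' t') (c : Bool)
    (hs : L.side s = c) (ht : L.side t = !c) (hs' : L.side s' = c) (ht' : L.side t' = c)
    {z : ℝ × ℝ} (hz : z ∈ (L.zpoly s t).curve)
    (hz' : z ∈ (L.zpoly s' t').curve) : Common L s t s' t' z := by
  have a := curveO hl c hs ht hz
  obtain ⟨b1, b2, b3, b4, b5, b6⟩ := curveS hl' c hs' ht' hz'
  have hne : c ≠ !c := by cases c <;> simp
  have hust : (L.u c s : ℝ) + 1 ≤ L.u c t := by exact_mod_cast L.u_lt c s t hl.1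
  have hbt := b6 t
  have hx : (L.u c s : ℝ) ≤ L.q c z ∧ L.q c z ≤ L.u c t := by
    rcases a with a | a | a
    · exact ⟨a.1, a.2.1⟩
    · exact ⟨by linarith [a.1], a.1.le⟩
    · linarith [a.1]
  rcases lt_trichotomy (L.K s) (L.K s') with h1 | h1 | h1
  · have hk : L.K t < L.K s' := by
      rcases lt_trichotomy (L.K t) (L.K s') with h | h | h
      · exact h
      · have := L.K_inj h
        exact absurd (hs'.symm.trans (this ▸ ht)) hne
      · exact absurd (hs'.trans hs.symm) (hl.2 s' h1 h)
    have : (L.u c t : ℝ) + 1 ≤ L.u c s' := by exact_mod_cast L.u_lt c t s' hk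
    linarith
  · have hss := L.K_inj h1
    subst hss
    have hk : L.K t < L.K t' := by
      rcases lt_trichotomy (L.K t) (L.K t') with h | h | h
      · exact h
      · have := L.K_inj h
        exact absurd (ht'.symm.trans (this ▸ ht)) hne
      · exact absurd (ht'.trans hs.symm) (hl.2 t' hl'.1 h)
    have hg : (L.u c t : ℝ) + 2 ≤ L.u c t' := by
      have := L.u_gap s t' (hs.trans ht'.symm) hl'.1 t hk
      rw [ht'] at this
      exact_mod_cast this
    obtain ⟨c1, c2⟩ := b5 (by linarith [hx.2])
    rcases a with a | a | a
    · have : L.q (!c) z = L.D s := le_antisymm a.2.2.2.1 c1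
      exact ⟨s, Or.inl rfl, Or.inl rfl, L.eq_pos s z (by rw [hs]; exact c2 this)
        (by rw [hs]; exact this)⟩
    · linarith [a.2.2]
    · linarith [a.1]
  · have hk : L.K t' ≤ L.K s := by
      by_contra h
      exact hl'.2 s h1 (by omega) (hs.trans hs'.symm)
    have h2 : (L.u c t' : ℝ) ≤ L.u c s := by exact_mod_cast L.u_le c t' s hk
    have h3 : (L.u c t' : ℝ) = L.u c s := by linarith [hx.1]
    have h4 : t' = s := L.u_inj c t' s (by exact_mod_cast h3)
    refine ⟨s, Or.inl rfl, Or.inr h4.symm, L.eq_pos s z ?_ ?_⟩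
    · rw [hs]; linarith [hx.1]
    · rw [hs, ← h4]; exact b4 (by linarith [hx.1])

theorem planarSO' {s t s' t' : V} (hl : L.Lat s t) (hl' : L.Lat s' t') (c : Bool)
    (hs : L.side s = !c) (ht : L.side t = c) (hs' : L.side s' = c) (ht' : L.side t' = c)
    {z : ℝ × ℝ} (hz : z ∈ (L.zpoly s t).curve)
    (hz' : z ∈ (L.zpoly s' t').curve) : Common L s t s' t' z := by
  have a := curveO hl (!c) hs (by rw [Bool.not_not]; exact ht) hz
  rw [Bool.not_not] at a
  obtain ⟨b1, b2, b3, b4, b5, b6⟩ := curveS hl' c hs' ht' hz'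
  have hbt := b6 t
  rcases a with a | a | a
  · linarith [a.2.1]
  · linarith [a.1]
  have hx := a.1
  have hk : L.K s' ≤ L.K t := by
    by_contra h
    have : (L.u c t : ℝ) + 1 ≤ L.u c s' := by exact_mod_cast L.u_lt c t s' (by omega)
    linarith
  have hk' : L.K t ≤ L.K t' := by
    by_contra h
    have : (L.u c t' : ℝ) + 1 ≤ L.u c t := by exact_mod_cast L.u_lt c t' t (by omega)
    linarith
  rcases hk.lt_or_eq with h | h
  · rcases hk'.lt_or_eq with h' | h'
    · exact absurd (ht.trans hs'.symm) (hl'.2 t h h')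
    · have := L.K_inj h'
      subst this
      exact ⟨t, Or.inr rfl, Or.inr rfl, L.eq_pos t z (by rw [ht]; exact hx)
        (by rw [ht]; exact b4 hx)⟩
  · have := L.K_inj h
    subst this
    exact ⟨s', Or.inr rfl, Or.inl rfl, L.eq_pos s' z (by rw [ht]; exact hx)
        (by rw [ht]; exact b3 hx)⟩

theorem planarOO {s t s' t' : V} (hl : L.Lat s t) (hl' : L.Lat s' t') (c : Bool)
    (hs : L.side s = c) (ht : L.side t = !c) (hs' : L.side s' = c) (ht' : L.side t' = !c)
    (hlt : L.K t < L.K t') {z : ℝ × ℝ} (hz : z ∈ (L.zpoly s t).curve)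
    (hz' : z ∈ (L.zpoly s' t').curve) : Common L s t s' t' z := by
  have a := curveO hl c hs ht hz
  have b := curveO hl' c hs' ht' hz'
  have hne : c ≠ !c := by cases c <;> simp
  have hust : (L.u c s : ℝ) + 1 ≤ L.u c t := by exact_mod_cast L.u_lt c s t hl.1
  have hutt : (L.u c t : ℝ) + 1 ≤ L.u c t' := by exact_mod_cast L.u_lt c t t' hlt
  have hvtt : (L.u (!c) t : ℝ) + 1 ≤ L.u (!c) t' := by exact_mod_cast L.u_lt (!c) t t' hlt
  have hD' : (L.u (!c) t' : ℝ) + 1 ≤ L.D s' := by exact_mod_cast hs' ▸ L.D_gt s' t'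
  have hss : s = s' ∨ L.K t < L.K s' := by
    rcases lt_trichotomy (L.K s) (L.K s') with h | h | h
    · right
      rcases lt_trichotomy (L.K t) (L.K s') with h' | h' | h'
      · exact h'
      · have := L.K_inj h'
        exact absurd (hs'.symm.trans (this ▸ ht)) hne
      · exact absurd (hs'.trans hs.symm) (hl.2 s' h h')
    · exact Or.inl (L.K_inj h)
    · exact absurd (hs.trans hs'.symm) (hl'.2 s h (hl.1.trans hlt))
  have hrow : ¬ (L.q (!c) z = L.u (!c) t) := by
    intro h
    rcases b with b | b | b
    · linarith [b.2.2.1]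
    · linarith [b.2.1]
    · linarith [b.1]
  have hx : L.q c z ≤ L.u c t := by
    rcases a with a | a | a
    · exact a.2.1
    · exact a.1.le
    · exact absurd a.1 hrow
  rcases b with b | b | b
  · rcases hss with rfl | hss
    · rcases a with a | a | a
      · have h1 := a.2.2.2.2
        have h2 := b.2.2.2.2
        have h3 : ((L.D s : ℝ) - L.q (!c) z) * ((L.u c t' : ℝ) - L.u c t) = 0 := by linarith
        have h4 : (L.D s : ℝ) - L.q (!c) z = 0 := by
          rcases mul_eq_zero.mp h3 with h | h
          · exact h
          · linarith
        rw [h4, zero_mul] at h1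
        exact ⟨s, Or.inl rfl, Or.inl rfl, L.eq_pos s z (by rw [hs]; linarith)
          (by rw [hs]; linarith)⟩
      · have h2 := b.2.2.2.2
        have h5 := a.2.2
        nlinarith [a.1]
      · exact absurd a.1 hrow
    · have : (L.u c t : ℝ) + 1 ≤ L.u c s' := by exact_mod_cast L.u_lt c t s' hss
      linarith [b.1]
  · linarith [b.1]
  · linarith [b.2.1]

theorem planarOO' {s t s' t' : V} (hl : L.Lat s t) (hl' : L.Lat s' t') (c : Bool)
    (hs : L.side s = c) (ht : L.side t = !c) (hs' : L.side s' = !c) (ht' : L.side t' = c)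
    (hlt : L.K t < L.K t') {z : ℝ × ℝ} (hz : z ∈ (L.zpoly s t).curve)
    (hz' : z ∈ (L.zpoly s' t').curve) : Common L s t s' t' z := by
  have a := curveO hl c hs ht hz
  have b := curveO hl' (!c) hs' (by rw [Bool.not_not]; exact ht') hz'
  rw [Bool.not_not] at b
  have hutt : (L.u c t : ℝ) + 1 ≤ L.u c t' := by exact_mod_cast L.u_lt c t t' hlt
  have hvtt : (L.u (!c) t : ℝ) + 1 ≤ L.u (!c) t' := by exact_mod_cast L.u_lt (!c) t t' hlt
  have hD' : (L.u c t' : ℝ) + 1 ≤ L.D s' := by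
    have := L.D_gt s' t'
    rw [hs', Bool.not_not] at this
    exact_mod_cast this
  have hk : L.K t ≤ L.K s' := by
    by_contra h
    exact hl'.2 t (by omega) hlt (ht.trans hs'.symm)
  have hvs : (L.u (!c) s' : ℝ) + 1 ≤ L.u (!c) t' := by exact_mod_cast L.u_lt (!c) s' t' hl'.1
  have hx : ¬ (L.q c z ≤ L.u c t) := by
    intro h
    rcases b with b | b | b
    · linarith [b.2.2.1]
    · linarith [b.2.1]
    · linarith [b.1]
  rcases a with a | a | a
  · exact absurd a.2.1 hx
  · exact absurd a.1.le hx
  · rcases b with b | b | b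
    · have h1 : (L.u (!c) t : ℝ) ≤ L.u (!c) s' := by exact_mod_cast L.u_le (!c) t s' hk
      have h2 : (L.u (!c) t : ℝ) = L.u (!c) s' := by linarith [b.1, a.1]
      have h3 : t = s' := L.u_inj (!c) t s' (by exact_mod_cast h2)
      have h4 : ((L.D s' : ℝ) - L.q c z) * ((L.u (!c) t' : ℝ) - L.u (!c) s') = 0 := by
        rw [b.2.2.2.2]; linarith [a.1]
      have h5 : (L.D s' : ℝ) - L.q c z = 0 := by
        rcases mul_eq_zero.mp h4 with h | h
        · exact h
        · linarith
      refine ⟨s', Or.inr h3.symm, Or.inl rfl, L.eq_pos s' z ?_ ?_⟩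
      · rw [hs']; linarith [a.1]
      · rw [hs', Bool.not_not]; linarith
    · linarith [a.1, b.1]
    · linarith [a.1, b.2.1]

theorem bool_cases (a c : Bool) : a = c ∨ a = !c := by cases a <;> cases c <;> simp

theorem planarZ {s t s' t' : V} (hl : L.Lat s t) (hl' : L.Lat s' t')
    (hne : ¬ (s = s' ∧ t = t')) {z : ℝ × ℝ} (hz : z ∈ (L.zpoly s t).curve)
    (hz' : z ∈ (L.zpoly s' t').curve) : Common L s t s' t' z := by
  obtain ⟨c, hs⟩ : ∃ c, L.side s = c := ⟨_, rfl⟩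
  have htt : L.side s = L.side s' → L.K t ≠ L.K t' := fun h h' => by
    have := L.K_inj h'
    subst this
    exact hne ⟨hl.unique hl' h, rfl⟩
  have hcc : ∀ a, L.side a = c → L.side a = !!c := fun a h => by rw [Bool.not_not]; exact h
  rcases bool_cases (L.side t) c with ht | ht <;> rcases bool_cases (L.side s') c with hs' | hs' <;>
    rcases bool_cases (L.side t') c with ht' | ht'
  · rcases Nat.lt_or_gt_of_ne (htt (hs.trans hs'.symm)) with h | h
    · exact planarSS hl hl' c hs ht hs' ht' h hz hz'
    · exact (planarSS hl' hl c hs' ht' hs ht h hz' hz).symm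
  · exact (planarSO hl' hl c hs' ht' hs ht hz' hz).symm
  · exact (planarSO' hl' hl c hs' ht' hs ht hz' hz).symm
  · exact (planarSS' hl hl' c hs ht hs' ht' hz hz').elim
  · exact planarSO hl hl' c hs ht hs' ht' hz hz'
  · rcases Nat.lt_or_gt_of_ne (htt (hs.trans hs'.symm)) with h | h
    · exact planarOO hl hl' c hs ht hs' ht' h hz hz'
    · exact (planarOO hl' hl c hs' ht' hs ht h hz' hz).symm
  · rcases lt_trichotomy (L.K t) (L.K t') with h | h | h
    · exact planarOO' hl hl' c hs ht hs' ht' h hz hz'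
    · have := L.K_inj h
      subst this
      rw [ht] at ht'
      cases c <;> simp at ht'
    · exact (planarOO' hl' hl (!c) hs' (hcc _ ht') (hcc _ hs) ht h hz' hz).symm
  · have hfin := planarSO' hl hl' (!c) (hcc _ hs) ht hs' ht' hz hz'
    exact hfin

/-- Points of the curve of a matching edge. -/
theorem curveM {v w : V} (hk : L.key v = L.key w) {z : ℝ × ℝ} (hz : z ∈ (L.mpoly v w).curve) :
    ∃ a b, L.key a = L.key v ∧ L.key b = L.key v ∧ L.q (!L.side a) z = L.D a ∧
      (L.side b ≠ L.side a → L.q (L.side a) z ≤ L.D b) ∧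
      (L.side b = L.side a → ∀ x, L.side x ≠ L.side a → L.q (L.side a) z < L.D x) := by
  simp only [Polyline.curve, Set.mem_iUnion] at hz
  obtain ⟨i, hi⟩ := hz
  simp only [mpoly] at i hi
  by_cases hs : L.side v = L.side w
  · refine ⟨v, w, rfl, hk.symm, ?_⟩
    have hD := L.D_eq v w hs hk
    have hx : ∀ r x, L.side x ≠ L.side v → (L.u (L.side v) r : ℝ) + 1 ≤ L.D x := by
      intro r x hx
      have := L.D_gt x r
      have h2 : (!L.side x) = L.side v := by
        rcases bool_cases (L.side x) (L.side v) with h | h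
        · exact absurd h hx
        · rw [h, Bool.not_not]
      rw [h2] at this
      exact_mod_cast this
    rw [mpts, if_pos hs] at hi
    obtain ⟨θ, h0, h01, hq⟩ := L.seg_param hi
    have e1 := hq (L.side v)
    have e2 := hq (!L.side v)
    rw [← hs]
    fin_cases i
    · simp [pos, ← hs, hD] at e1 e2
      refine ⟨by rw [e2, hD], fun h => absurd rfl h, fun _ x hxx => ?_⟩
      have := hx v x hxx
      have := hx w x hxx
      rw [e1]
      nlinarith
    · simp [pos, ← hs, hD] at e1 e2
      refine ⟨by rw [e2, hD], fun h => absurd rfl h, fun _ x hxx => ?_⟩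
      have := hx w x hxx
      linarith
  · have hw : L.side w = !L.side v := by
      rcases bool_cases (L.side w) (L.side v) with h | h
      · exact absurd h.symm hs
      · exact h
    have hpw : L.pos w = L.pt (L.side v) (L.D w) (L.u (!L.side v) w) := by rw [pos, hw, pt_swap]
    have hpv : L.pos v = L.pt (L.side v) (L.u (L.side v) v) (L.D v) := rfl
    rw [mpts, if_neg hs, hpw, hpv] at hi
    obtain ⟨θ, h0, h01, hq⟩ := L.seg_param hi
    have e1 := hq (L.side v)
    have e2 := hq (!L.side v)
    have g1 : (L.u (L.side v) v : ℝ) + 1 ≤ L.D w := by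
      have := L.D_gt w v
      rw [hw, Bool.not_not] at this
      exact_mod_cast this
    have g2 : (L.u (!L.side v) w : ℝ) + 1 ≤ L.D v := by exact_mod_cast L.D_gt v w
    fin_cases i
    · simp at e1 e2
      refine ⟨v, w, rfl, hk.symm, e2, fun _ => ?_, fun h => absurd h.symm hs⟩
      rw [e1]; nlinarith
    · simp at e1 e2
      refine ⟨w, v, hk.symm, rfl, ?_, fun _ => ?_, fun h => absurd h hs⟩
      · rw [hw, Bool.not_not, e1]
      · rw [hw, e2]; nlinarith

theorem planarM {v w v' w' : V} (hk : L.key v = L.key w) (hk' : L.key v' = L.key w')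
    (hne : L.key v ≠ L.key v') {z : ℝ × ℝ} (hz : z ∈ (L.mpoly v w).curve)
    (hz' : z ∈ (L.mpoly v' w').curve) : False := by
  obtain ⟨a, b, h1, h2, h3, h4, h5⟩ := curveM hk hz
  obtain ⟨a', b', h1', h2', h3', h4', h5'⟩ := curveM hk' hz'
  have hlt : ∀ x y, L.side x = L.side y → L.D x ≤ L.D y → L.key x ≤ L.key y := by
    intro x y hs hD
    by_contra h
    have := L.D_lt y x hs.symm (by omega)
    omega
  rcases bool_cases (L.side a') (L.side a) with hs | hs
  · rw [hs, h3] at h3'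
    have : L.D a = L.D a' := by exact_mod_cast h3'
    have e1 := hlt a a' hs.symm this.le
    have e2 := hlt a' a hs this.ge
    omega
  · have hne1 : L.side a' ≠ L.side a := by rw [hs]; cases L.side a <;> simp
    rw [hs, Bool.not_not] at h3'
    rw [hs] at h4' h5'
    by_cases hb : L.side b = L.side a
    · have := h5 hb a' hne1
      linarith
    by_cases hb' : L.side b' = !L.side a
    · have := h5' hb' a (by cases L.side a <;> simp)
      linarith
    have e1 := h4 hb
    have e2 := h4' hb'
    have f1 : L.D a' ≤ L.D b := by rw [h3'] at e1; exact_mod_cast e1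
    have f2 : L.D a ≤ L.D b' := by rw [h3] at e2; exact_mod_cast e2
    have k1 : L.side b = L.side a' := by
      rcases bool_cases (L.side b) (L.side a) with h | h
      · exact absurd h hb
      · rw [h, hs]
    have k2 : L.side b' = L.side a := by
      rcases bool_cases (L.side b') (L.side a) with h | h
      · exact h
      · exact absurd h hb'
    have := hlt a' b k1.symm f1
    have := hlt a b' k2.symm f2
    omega

/-- Every segment of a matching edge is axis-parallel at the depth of a vertex. -/
theorem segM {v w : V} (hk : L.key v = L.key w) {m : (ℝ × ℝ) × (ℝ × ℝ)}
    (hm : m ∈ (L.mpoly v w).segs) :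
    ∃ a, L.q (!L.side a) m.1 = L.D a ∧ L.q (!L.side a) m.2 = L.D a := by
  obtain ⟨i, rfl⟩ := hm
  simp only [mpoly] at i ⊢
  rw [mpts]
  split_ifs with hs
  · have hD := L.D_eq v w hs hk
    fin_cases i
    · refine ⟨v, ?_, ?_⟩
      · simp [pos]
      · simp [pos, hs, hD]
    · exact ⟨w, by simp [pos], by simp [pos]⟩
  · have hw : L.side w = !L.side v := by
      rcases bool_cases (L.side w) (L.side v) with h | h
      · exact absurd h.symm hs
      · exact h
    fin_cases i
    · exact ⟨v, by simp [pos], by simp⟩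
    · refine ⟨w, ?_, by simp [pos]⟩
      simp [hw]

/-- Segments of outerpath edges versus the depth of a vertex. -/
theorem segZ {s t : V} (hl : L.Lat s t) (a : V) {m : (ℝ × ℝ) × (ℝ × ℝ)}
    (hm : m ∈ (L.zpoly s t).segs) :
    L.q (L.side a) m.1 = L.q (L.side a) m.2 ∨
    (L.q (!L.side a) m.1 ≤ L.D a ∧ L.q (!L.side a) m.2 ≤ L.D a ∧
      (L.q (!L.side a) m.1 < L.D a ∨ L.q (!L.side a) m.2 < L.D a)) ∨
    ((L.D a : ℝ) ≤ L.q (!L.side a) m.1 ∧ (L.D a : ℝ) ≤ L.q (!L.side a) m.2 ∧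
      ((L.D a : ℝ) < L.q (!L.side a) m.1 ∨ (L.D a : ℝ) < L.q (!L.side a) m.2)) := by
  have hDD : ∀ x, L.side x = L.side a → (L.D x : ℝ) + 2 ≤ L.D a ∨ (L.D x : ℝ) = L.D a ∨
      (L.D a : ℝ) + 2 ≤ L.D x := by
    intro x hx
    rcases lt_trichotomy (L.key x) (L.key a) with h | h | h
    · left; exact_mod_cast L.D_lt x a hx h
    · right; left; exact_mod_cast L.D_eq x a hx h
    · right; right; exact_mod_cast L.D_lt a x hx.symm h
  have hua : ∀ r, (L.u (!L.side a) r : ℝ) + 1 ≤ L.D a := fun r => by exact_mod_cast L.D_gt a r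
  have hs1 := hua s
  have ht1 := hua t
  obtain ⟨i, rfl⟩ := hm
  simp only [zpoly] at i ⊢
  rw [zpts]
  rcases bool_cases (L.side s) (L.side a) with hs | hs <;>
    rcases bool_cases (L.side t) (L.side a) with ht | ht
  · rw [if_pos (hs.trans ht.symm)]
    have d1 := hDD s hs
    have d2 := hDD t ht
    fin_cases i
    · right
      simp [-Int.cast_le, -Int.cast_lt, pos, hs]
      rcases d1 with d | d | d
      · left; refine ⟨by linarith, by linarith, by left; linarith⟩
      · right; refine ⟨by linarith, by linarith, by right; linarith⟩
      · right; refine ⟨by linarith, by linarith, by right; linarith⟩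
    · left; simp [-Int.cast_le, -Int.cast_lt, hs]
    · right
      simp [-Int.cast_le, -Int.cast_lt, pos, hs, ht]
      rcases d2 with d | d | d
      · left; refine ⟨by linarith, by linarith, by left; linarith⟩
      · right; refine ⟨by linarith, by linarith, by left; linarith⟩
      · right; refine ⟨by linarith, by linarith, by right; linarith⟩
  · rw [if_neg (by rw [hs, ht]; cases L.side a <;> simp)]
    have d1 := hDD s hs
    fin_cases i
    · right
      simp [-Int.cast_le, -Int.cast_lt, pos, hs]
      rcases d1 with d | d | d
      · left; refine ⟨by linarith, by linarith, by right; linarith⟩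
      · left; refine ⟨by linarith, by linarith, by right; linarith⟩
      · right; refine ⟨by linarith, by linarith, by left; linarith⟩
    · left; simp [-Int.cast_le, -Int.cast_lt, hs]
    · right; left
      simp [-Int.cast_le, -Int.cast_lt, pos, hs, ht]
      refine ⟨by linarith, by linarith⟩
  · rw [if_neg (by rw [hs, ht]; cases L.side a <;> simp)]
    have hst : (L.u (!L.side a) s : ℝ) + 1 ≤ L.u (!L.side a) t := by
      exact_mod_cast L.u_lt _ s t hl.1
    fin_cases i
    · right; left
      simp [-Int.cast_le, -Int.cast_lt, pos, hs]
      refine ⟨by linarith, by linarith, by left; linarith⟩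
    · right; left
      simp [-Int.cast_le, -Int.cast_lt, hs]
      refine ⟨by linarith, by linarith⟩
    · left
      simp [-Int.cast_le, -Int.cast_lt, pos, hs, ht, pt_swap]
  · rw [if_pos (hs.trans ht.symm)]
    fin_cases i
    · right; left
      simp [-Int.cast_le, -Int.cast_lt, pos, hs]
      refine ⟨by linarith, by linarith, by left; linarith⟩
    · right; left
      simp [-Int.cast_le, -Int.cast_lt, hs]
      constructor <;> linarith
    · right; left
      simp [-Int.cast_le, -Int.cast_lt, pos, hs, ht]
      refine ⟨by linarith, by linarith, by left; linarith⟩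

/-- Segments of an outerpath edge and a matching edge meet at most once, and perpendicularly. -/
theorem segZM {s t v w : V} (hl : L.Lat s t) (hk : L.key v = L.key w)
    {m m' : (ℝ × ℝ) × (ℝ × ℝ)} (hm : m ∈ (L.zpoly s t).segs) (hm' : m' ∈ (L.mpoly v w).segs) :
    (segment ℝ m.1 m.2 ∩ segment ℝ m'.1 m'.2).Subsingleton ∧ (SegCross m m' → SegPerp m m') := by
  obtain ⟨a, h1, h2⟩ := segM hk hm'
  have hlev : ∀ z ∈ segment ℝ m'.1 m'.2, L.q (!L.side a) z = L.D a := by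
    intro z hz
    obtain ⟨θ, _, _, hq⟩ := L.seg_param hz
    rw [hq, h1, h2]; ring
  rcases segZ hl a hm with h | h
  · constructor
    · rintro z ⟨hz, hz'⟩ y ⟨hy, hy'⟩
      apply L.q_ext (L.side a)
      · obtain ⟨θ, _, _, hq⟩ := L.seg_param hz
        obtain ⟨θ', _, _, hq'⟩ := L.seg_param hy
        rw [hq, hq', h]; ring
      · rw [hlev z hz', hlev y hy']
    · intro _
      unfold SegPerp
      cases hc : L.side a
      · rw [hc] at h h1 h2
        simp [q] at h h1 h2
        rw [h1, h2, h]; ring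
      · rw [hc] at h h1 h2
        simp [q] at h h1 h2
        have : m'.1.2 = m'.2.2 := by linarith
        rw [this, h]; ring
  · constructor
    · rintro z ⟨hz, hz'⟩ y ⟨hy, hy'⟩
      obtain ⟨θ, g1, g2, hq⟩ := L.seg_param hz
      obtain ⟨θ', g3, g4, hq'⟩ := L.seg_param hy
      have e1 := hlev z hz'
      have e2 := hlev y hy'
      have f1 := hq (!L.side a)
      have f2 := hq' (!L.side a)
      have hd : L.q (!L.side a) m.2 - L.q (!L.side a) m.1 ≠ 0 := by
        intro hd
        rw [hd] at f1
        rcases h with ⟨_, _, h | h⟩ | ⟨_, _, h | h⟩ <;> linarith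
      have : θ = θ' := by
        have : (θ - θ') * (L.q (!L.side a) m.2 - L.q (!L.side a) m.1) = 0 := by linarith
        rcases mul_eq_zero.mp this with h | h
        · linarith
        · exact absurd h hd
      apply L.q_ext true
      · rw [hq, hq', this]
      · rw [hq, hq', this]
    · rintro ⟨z, hz, hz'⟩
      exfalso
      have e1 := hlev z (openSegment_subset_segment ℝ _ _ hz')
      obtain ⟨θ, g1, g2, hq⟩ := L.openSeg_param hz
      have f1 := hq (!L.side a)
      rcases h with ⟨_, _, h | h⟩ | ⟨_, _, h | h⟩ <;> nlinarith

end Layout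

/-! ### Grid bounds -/

namespace Layout

variable {V : Type} {L : Layout V}

theorem onGrid_pt (c : Bool) (a b : ℤ) (ha : 1 ≤ a) (ha' : a ≤ L.N) (hb : 1 ≤ b) (hb' : b ≤ L.N) :
    OnGridPt L.N L.N (L.pt c a b) := by
  cases c
  · exact ⟨b, L.N + 1 - a, by simp [pt], hb, hb', by omega, by omega⟩
  · exact ⟨a, L.N + 1 - b, by simp [pt], ha, ha', by omega, by omega⟩

theorem D_pos (v : V) : 2 ≤ L.D v := by
  have := L.D_gt v v
  have := L.u_pos (!L.side v) v
  omega

theorem onGrid_pos (v : V) : OnGridPt L.N L.N (L.pos v) := by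
  have := L.D_pos v
  have := L.D_le v
  exact onGrid_pt _ _ _ (L.u_pos _ _) (L.u_le_N _ _) (by omega) (by omega)

theorem onGrid_z {s t : V} (hl : L.Lat s t) (k : Fin 4) : OnGridPt L.N L.N (L.zpts s t k) := by
  have h1 := L.D_pos s
  have h2 := L.D_le s
  have h3 := L.D_pos t
  have h4 := L.D_le t
  have h5 := L.u_pos (L.side s) t
  have h6 := L.u_le_N (L.side s) t
  have h7 := L.u_pos (L.side t) t
  have h8 := L.u_le_N (L.side t) t
  rw [zpts]
  split_ifs with hs
  · have h9 := L.u_gap s t hs hl.1 s hl.1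
    have h10 := L.u_pos (L.side t) s
    rw [← hs] at h9 h10
    fin_cases k
    · exact onGrid_pos s
    · exact onGrid_pt _ _ _ (by omega) (by omega) (by omega) (by omega)
    · exact onGrid_pt _ _ _ (by omega) (by omega) (by omega) (by omega)
    · exact onGrid_pos t
  · fin_cases k
    · exact onGrid_pos s
    · exact onGrid_pt _ _ _ (by omega) (by omega) (by omega) (by omega)
    · exact onGrid_pt _ _ _ (by omega) (by omega) (by omega) (by omega)
    · exact onGrid_pos t

theorem onGrid_m (v w : V) (k : Fin 3) : OnGridPt L.N L.N (L.mpts v w k) := by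
  have h1 := L.D_pos v
  have h2 := L.D_le v
  have h3 := L.D_pos w
  have h4 := L.D_le w
  rw [mpts]
  split_ifs with hs
  · fin_cases k
    · exact onGrid_pos v
    · exact onGrid_pos w
    · exact onGrid_pos w
  · fin_cases k
    · exact onGrid_pos v
    · exact onGrid_pt _ _ _ (by omega) (by omega) (by omega) (by omega)
    · exact onGrid_pos w

theorem z_first (s t : V) : (L.zpoly s t).first = L.pos s := by
  change L.zpts s t 0 = _
  rw [zpts]; split_ifs <;> rfl

theorem z_last (s t : V) : (L.zpoly s t).last = L.pos t := by
  change L.zpts s t 3 = _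
  rw [zpts]; split_ifs <;> rfl

theorem m_first (s t : V) : (L.mpoly s t).first = L.pos s := by
  change L.mpts s t 0 = _
  rw [mpts]; split_ifs <;> rfl

theorem m_last (s t : V) : (L.mpoly s t).last = L.pos t := by
  change L.mpts s t 2 = _
  rw [mpts]; split_ifs <;> rfl

theorem exists_ordered (L : Layout V) (e : Sym2 V) :
    ∃ p : V × V, e = s(p.1, p.2) ∧ L.K p.1 ≤ L.K p.2 := by
  induction e using Sym2.ind with
  | _ a b =>
    rcases le_total (L.K a) (L.K b) with h | h
    · exact ⟨(a, b), rfl, h⟩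
    · exact ⟨(b, a), Sym2.eq_swap, h⟩

/-- The endpoints of an edge, ordered along the strip. -/
noncomputable def ends (L : Layout V) (e : Sym2 V) : V × V := (L.exists_ordered e).choose

theorem ends_eq (L : Layout V) (e : Sym2 V) : e = s((L.ends e).1, (L.ends e).2) :=
  (L.exists_ordered e).choose_spec.1

theorem ends_le (L : Layout V) (e : Sym2 V) : L.K (L.ends e).1 ≤ L.K (L.ends e).2 :=
  (L.exists_ordered e).choose_spec.2

theorem seg_sub_curve (P : Polyline) {m : (ℝ × ℝ) × (ℝ × ℝ)} (hm : m ∈ P.segs) :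
    segment ℝ m.1 m.2 ⊆ P.curve := by
  obtain ⟨i, rfl⟩ := hm
  exact Set.subset_iUnion (fun i : Fin P.n => segment ℝ (P.pts i.castSucc) (P.pts i.succ)) i

/-- The polylines of the drawing: `0` for the outerpath and `1` for the matching. -/
noncomputable def polyl (L : Layout V) (i : Fin 2) (e : Sym2 V) : Polyline :=
  if i = 0 then L.zpoly (L.ends e).1 (L.ends e).2 else L.mpoly (L.ends e).1 (L.ends e).2

/-- The simultaneous drawing given by a layout. -/
noncomputable def drawing (L : Layout V) (Z M : SimpleGraph V) : SimDrawing ![Z, M] where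
  pos := L.pos
  pos_injective := L.pos_injective
  poly := L.polyl
  joins := by
    intro i a b _
    have h := L.ends_eq s(a, b)
    have h1 : (L.polyl i s(a, b)).first = L.pos (L.ends s(a, b)).1 := by
      rw [polyl]; split_ifs
      · exact z_first _ _
      · exact m_first _ _
    have h2 : (L.polyl i s(a, b)).last = L.pos (L.ends s(a, b)).2 := by
      rw [polyl]; split_ifs
      · exact z_last _ _
      · exact m_last _ _
    rw [h1, h2]
    generalize L.ends s(a, b) = p at h
    rcases Sym2.eq_iff.mp h with ⟨rfl, rfl⟩ | ⟨rfl, rfl⟩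
    · exact Or.inl ⟨rfl, rfl⟩
    · exact Or.inr ⟨rfl, rfl⟩

theorem ends_Z {L : Layout V} {Z : SimpleGraph V}
    (hZ : ∀ a b, Z.Adj a b → L.K a < L.K b → L.Lat a b) {e : Sym2 V} (he : e ∈ Z.edgeSet) :
    L.Lat (L.ends e).1 (L.ends e).2 := by
  have h : Z.Adj (L.ends e).1 (L.ends e).2 := by
    rw [L.ends_eq e] at he; exact he
  refine hZ _ _ h (lt_of_le_of_ne (L.ends_le e) fun h' => h.ne (L.K_inj h'))

theorem ends_M {L : Layout V} {M : SimpleGraph V}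
    (hM : ∀ a b, L.key a = L.key b ↔ a = b ∨ M.Adj a b) {e : Sym2 V} (he : e ∈ M.edgeSet) :
    L.key (L.ends e).1 = L.key (L.ends e).2 := by
  rw [L.ends_eq e] at he
  exact (hM _ _).2 (Or.inr he)

theorem ends_key_ne {L : Layout V} {M : SimpleGraph V} (hMM : IsMatchingGraph M) [Finite V]
    (hM : ∀ a b, L.key a = L.key b ↔ a = b ∨ M.Adj a b) {e e' : Sym2 V} (he : e ∈ M.edgeSet)
    (he' : e' ∈ M.edgeSet) (hne : e ≠ e') : L.key (L.ends e).1 ≠ L.key (L.ends e').1 := by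
  intro h
  apply hne
  have h1 : M.Adj (L.ends e).1 (L.ends e).2 := by
    rw [L.ends_eq e] at he; exact he
  have h2 : M.Adj (L.ends e').1 (L.ends e').2 := by
    rw [L.ends_eq e'] at he'; exact he'
  rw [L.ends_eq e, L.ends_eq e']
  have hu : ∀ v a b, M.Adj v a → M.Adj v b → a = b := fun v a b ha hb =>
    (Set.ncard_le_one_iff (Set.toFinite _)).1 (hMM v) ha hb
  rcases (hM _ _).1 h with h | h
  · rw [h] at h1
    rw [h, hu _ _ _ h1 h2]
  · rw [hu _ _ _ h1 h, hu _ _ _ h2 h.symm]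
    exact Sym2.eq_swap

theorem drawing_planar (L : Layout V) (Z M : SimpleGraph V) [Finite V]
    (hZ : ∀ a b, Z.Adj a b → L.K a < L.K b → L.Lat a b) (hMM : IsMatchingGraph M)
    (hM : ∀ a b, L.key a = L.key b ↔ a = b ∨ M.Adj a b) : (L.drawing Z M).PlanarEach := by
  intro i e he e' he' hne z hz
  obtain ⟨hz, hz'⟩ := hz
  fin_cases i
  · change e ∈ Z.edgeSet at he
    change e' ∈ Z.edgeSet at he'
    change z ∈ (L.zpoly (L.ends e).1 (L.ends e).2).curve at hz
    change z ∈ (L.zpoly (L.ends e').1 (L.ends e').2).curve at hz'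
    have hn : ¬ ((L.ends e).1 = (L.ends e').1 ∧ (L.ends e).2 = (L.ends e').2) := by
      rintro ⟨h1, h2⟩
      apply hne
      rw [L.ends_eq e, L.ends_eq e', h1, h2]
    obtain ⟨v, h1, h2, h3⟩ := planarZ (ends_Z hZ he) (ends_Z hZ he') hn hz hz'
    refine ⟨v, ?_, ?_, h3⟩
    · rw [L.ends_eq e]; exact Sym2.mem_iff.2 h1
    · rw [L.ends_eq e']; exact Sym2.mem_iff.2 h2
  · change e ∈ M.edgeSet at he
    change e' ∈ M.edgeSet at he'
    change z ∈ (L.mpoly (L.ends e).1 (L.ends e).2).curve at hz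
    change z ∈ (L.mpoly (L.ends e').1 (L.ends e').2).curve at hz'
    exact (planarM (ends_M hM he) (ends_M hM he') (ends_key_ne hMM hM he he' hne) hz hz').elim

theorem drawing_cross (L : Layout V) (Z M : SimpleGraph V)
    (hZ : ∀ a b, Z.Adj a b → L.K a < L.K b → L.Lat a b)
    (hM : ∀ a b, L.key a = L.key b ↔ a = b ∨ M.Adj a b) (i j : Fin 2) (hij : i ≠ j)
    (e : Sym2 V) (he : e ∈ (![Z, M] i).edgeSet) (e' : Sym2 V) (he' : e' ∈ (![Z, M] j).edgeSet)
    (m m' : (ℝ × ℝ) × (ℝ × ℝ)) (hm : m ∈ (L.polyl i e).segs) (hm' : m' ∈ (L.polyl j e').segs) :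
    (segment ℝ m.1 m.2 ∩ segment ℝ m'.1 m'.2).Subsingleton ∧ (SegCross m m' → SegPerp m m') := by
  fin_cases i <;> fin_cases j
  · exact absurd rfl hij
  · exact segZM (ends_Z hZ he) (ends_M hM he') hm hm'
  · have h := segZM (ends_Z hZ he') (ends_M hM he) hm' hm
    refine ⟨by rw [Set.inter_comm]; exact h.1, fun hc => ?_⟩
    have := h.2 (by unfold SegCross at hc ⊢; rwa [Set.inter_comm])
    unfold SegPerp at this ⊢
    linarith
  · exact absurd rfl hij

theorem drawing_racsim (L : Layout V) (Z M : SimpleGraph V) [Finite V]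
    (hZ : ∀ a b, Z.Adj a b → L.K a < L.K b → L.Lat a b) (hMM : IsMatchingGraph M)
    (hM : ∀ a b, L.key a = L.key b ↔ a = b ∨ M.Adj a b) : (L.drawing Z M).IsRacSim := by
  have hpl := drawing_planar L Z M hZ hMM hM
  refine ⟨hpl, ?_, ?_⟩
  · intro i e he j e' he' hor m hm m' hm'
    by_cases hij : i = j
    · subst hij
      have hne : e ≠ e' := by simpa using hor
      rintro z ⟨hz1, hz2⟩ y ⟨hy1, hy2⟩
      obtain ⟨v, h1, h2, rfl⟩ := hpl i e he e' he' hne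
        ⟨seg_sub_curve _ hm hz1, seg_sub_curve _ hm' hz2⟩
      obtain ⟨w, h3, h4, rfl⟩ := hpl i e he e' he' hne
        ⟨seg_sub_curve _ hm hy1, seg_sub_curve _ hm' hy2⟩
      by_contra hvw
      have hvw' : v ≠ w := fun h => hvw (by rw [h])
      exact hne (((Sym2.mem_and_mem_iff hvw').1 ⟨h1, h3⟩).trans
        ((Sym2.mem_and_mem_iff hvw').1 ⟨h2, h4⟩).symm)
    · exact (drawing_cross L Z M hZ hM i j hij e he e' he' m m' hm hm').1
  · intro i j hij e he e' he' m hm m' hm'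
    exact (drawing_cross L Z M hZ hM i j hij e he e' he' m m' hm hm').2

theorem drawing_grid (L : Layout V) (Z M : SimpleGraph V)
    (hZ : ∀ a b, Z.Adj a b → L.K a < L.K b → L.Lat a b) : (L.drawing Z M).OnGrid L.N L.N := by
  refine ⟨onGrid_pos, ?_⟩
  intro i e he k
  fin_cases i
  · exact onGrid_z (ends_Z hZ he) k
  · exact onGrid_m _ _ k

end Layout

/-! ### Construction of the layout -/

theorem exists_key {V : Type} [Fintype V] (M : SimpleGraph V) (hM : IsMatchingGraph M) :
    ∃ key : V → ℕ, ∀ a b, key a = key b ↔ a = b ∨ M.Adj a b := by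
  classical
  have hu : ∀ v a b, M.Adj v a → M.Adj v b → a = b := fun v a b ha hb =>
    (Set.ncard_le_one_iff (Set.toFinite _)).1 (hM v) ha hb
  let S : Setoid V :=
    { r := fun a b => a = b ∨ M.Adj a b
      iseqv := ⟨fun a => Or.inl rfl, fun h => h.imp Eq.symm fun h => h.symm, by
        rintro a b c (rfl | h) (rfl | h')
        · exact Or.inl rfl
        · exact Or.inr h'
        · exact Or.inr h
        · exact Or.inl (hu _ _ _ h.symm h')⟩ }
  refine ⟨fun v => (Fintype.equivFin (Quotient S) (Quotient.mk S v)).val, fun a b => ?_⟩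
  rw [Fin.val_inj, (Fintype.equivFin (Quotient S)).injective.eq_iff, Quotient.eq]
  rfl

section Construct

variable {V : Type} [Fintype V] (K : V → ℕ) (side : V → Bool) (key : V → ℕ)

/-- Number of vertices up to `v`. -/
def cntAll (v : V) : ℕ := (Finset.univ.filter fun w => K w ≤ K v).card

/-- Number of vertices of side `c` up to `v`. -/
def cntSide (c : Bool) (v : V) : ℕ :=
  (Finset.univ.filter fun w => K w ≤ K v ∧ side w = c).card

/-- Number of vertices of side `c`. -/
def cntTot (c : Bool) : ℕ := (Finset.univ.filter fun w => side w = c).card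

/-- Rank of the matching class of `v` within its side. -/
def rnk (v : V) : ℕ :=
  ((Finset.univ.filter fun w => side w = side v ∧ key w ≤ key v).image key).card

theorem cntAll_lt {s t : V} (h : K s < K t) : cntAll K s + 1 ≤ cntAll K t := by
  apply Nat.succ_le_of_lt
  apply Finset.card_lt_card
  rw [Finset.ssubset_iff_of_subset]
  · exact ⟨t, by simp, by simpa using h⟩
  · intro w hw
    simp only [Finset.mem_filter, Finset.mem_univ, true_and] at hw ⊢
    omega

theorem cntAll_pos (v : V) : 1 ≤ cntAll K v :=
  Finset.card_pos.2 ⟨v, by simp⟩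

theorem cntAll_le (v : V) : cntAll K v ≤ Fintype.card V := Finset.card_le_univ _

theorem cntSide_le (c : Bool) {s t : V} (h : K s ≤ K t) :
    cntSide K side c s ≤ cntSide K side c t := by
  apply Finset.card_le_card
  intro w hw
  simp only [Finset.mem_filter, Finset.mem_univ, true_and] at hw ⊢
  exact ⟨hw.1.trans h, hw.2⟩

theorem cntSide_le_tot (c : Bool) (v : V) : cntSide K side c v ≤ cntTot side c := by
  apply Finset.card_le_card
  intro w hw
  simp only [Finset.mem_filter, Finset.mem_univ, true_and] at hw ⊢
  exact hw.2

theorem cntSide_pos (v : V) : 1 ≤ cntSide K side (side v) v :=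
  Finset.card_pos.2 ⟨v, by simp⟩

theorem cntSide_lt {s t : V} (h : K s < K t) :
    cntSide K side (side t) s + 1 ≤ cntSide K side (side t) t := by
  apply Nat.succ_le_of_lt
  apply Finset.card_lt_card
  rw [Finset.ssubset_iff_of_subset]
  · exact ⟨t, by simp, by simpa using h⟩
  · intro w hw
    simp only [Finset.mem_filter, Finset.mem_univ, true_and] at hw ⊢
    exact ⟨by omega, hw.2⟩

theorem cntTot_add (c : Bool) : cntTot side c + cntTot side (!c) = Fintype.card V := by
  have h := Finset.card_filter_add_card_filter_not (s := (Finset.univ : Finset V))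
    (fun w => side w = c)
  rw [Finset.card_univ] at h
  rw [← h, cntTot, cntTot]
  congr 2
  ext w
  cases side w <;> cases c <;> simp

theorem rnk_pos (v : V) : 1 ≤ rnk side key v :=
  Finset.card_pos.2 ⟨key v, Finset.mem_image.2 ⟨v, by simp, rfl⟩⟩

theorem rnk_le (v : V) : rnk side key v ≤ cntTot side (side v) := by
  refine Finset.card_image_le.trans (Finset.card_le_card ?_)
  intro w hw
  simp only [Finset.mem_filter, Finset.mem_univ, true_and] at hw ⊢
  exact hw.1

theorem rnk_eq {v w : V} (hs : side v = side w) (hk : key v = key w) :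
    rnk side key v = rnk side key w := by
  rw [rnk, rnk, hs, hk]

theorem rnk_lt {v w : V} (hs : side v = side w) (hk : key v < key w) :
    rnk side key v + 1 ≤ rnk side key w := by
  apply Nat.succ_le_of_lt
  apply Finset.card_lt_card
  rw [Finset.ssubset_iff_of_subset]
  · refine ⟨key w, Finset.mem_image.2 ⟨w, by simp, rfl⟩, ?_⟩
    intro h
    obtain ⟨x, hx, hx'⟩ := Finset.mem_image.1 h
    simp only [Finset.mem_filter, Finset.mem_univ, true_and] at hx
    omega
  · apply Finset.image_subset_image
    intro x hx
    simp only [Finset.mem_filter, Finset.mem_univ, true_and] at hx ⊢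
    exact ⟨hx.1.trans hs, by omega⟩

/-- The layout belonging to a strip order and an enumeration of the matching. -/
def mkLayout (hK : Function.Injective K) (hside : ∀ c, ∃ v, side v = c) : Layout V where
  K := K
  side := side
  key := key
  u c v := ((cntAll K v + (cntSide K side c v - 1) : ℕ) : ℤ)
  D v := (Fintype.card V : ℤ) + cntTot side (!side v) - 2 + 2 * rnk side key v
  N := 3 * (Fintype.card V : ℤ) - 2
  K_inj := hK
  u_lt c s t h := by
    have h1 := cntAll_lt K h
    have h2 := cntSide_le K side c h.le
    omega
  u_gap s t hst h r hr := by
    have h1 := cntAll_lt K hr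
    have h2 := cntSide_lt K side hr
    have h3 := cntSide_lt K side h
    have h4 := cntSide_pos K side s
    rw [hst] at h4
    omega
  D_gt v w := by
    have h1 := cntAll_le K w
    have h2 := cntSide_le_tot K side (!side v) w
    have h3 := rnk_pos side key v
    have h4 : 1 ≤ cntTot side (!side v) := by
      obtain ⟨x, hx⟩ := hside (!side v)
      exact Finset.card_pos.2 ⟨x, by simp [hx]⟩
    omega
  D_eq v w hs hk := by rw [rnk_eq side key hs hk, hs]
  D_lt v w hs hk := by
    have := rnk_lt side key hs hk
    rw [hs]; omega
  u_pos c v := by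
    have h1 := cntAll_pos K v
    omega
  D_le v := by
    have h1 := rnk_le side key v
    have h2 := cntTot_add side (side v)
    have h4 : 1 ≤ cntTot side (!side v) := by
      obtain ⟨x, hx⟩ := hside (!side v)
      exact Finset.card_pos.2 ⟨x, by simp [hx]⟩
    omega
  u_le_N c v := by
    have h1 := cntAll_le K v
    have h2 := cntSide_le_tot K side c v
    have h3 := cntTot_add side c
    have h4 : 1 ≤ cntTot side (!c) := by
      obtain ⟨x, hx⟩ := hside (!c)
      exact Finset.card_pos.2 ⟨x, by simp [hx]⟩
    have h5 : 1 ≤ cntTot side c := by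
      obtain ⟨x, hx⟩ := hside c
      exact Finset.card_pos.2 ⟨x, by simp [hx]⟩
    omega

end Construct

/-- An outerpath and a matching on a common set of `n ≥ 4` vertices admit a RacSim
drawing on an integer grid of size `(3n - 2) × (3n - 2)` with at most two bends per
outerpath edge and at most one bend per matching edge. -/
theorem racsim_outerpath_matching {V : Type} [Fintype V] (n : ℕ)
    (hcard : Fintype.card V = n) (hn : 4 ≤ n) (Z M : SimpleGraph V)
    (hZ : IsOuterpath n Z) (hM : IsMatchingGraph M) :
    ∃ D : SimDrawing ![Z, M], D.IsRacSim ∧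
      D.OnGrid (3 * (n : ℤ) - 2) (3 * (n : ℤ) - 2) ∧
      D.BendsAtMost 0 2 ∧ D.BendsAtMost 1 1 := by
  obtain ⟨f, H, hH, hZH⟩ := hZ
  obtain ⟨K, side, hK, hside, hlat⟩ := strip_order hn H hH
  obtain ⟨key, hkey⟩ := exists_key M hM
  have hsV : ∀ c, ∃ v, (side ∘ f.symm) v = c := fun c => by
    obtain ⟨v, hv⟩ := hside c
    exact ⟨f v, by simpa using hv⟩
  let L := mkLayout (K ∘ f.symm) (side ∘ f.symm) key (hK.comp f.symm.injective) hsV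
  have hL : ∀ a b, Z.Adj a b → L.K a < L.K b → L.Lat a b := by
    intro a b hab hlt
    refine ⟨hlt, fun w h1 h2 => ?_⟩
    exact hlat _ _ (hZH (f.symm a) (f.symm b) (by simpa using hab)) hlt (f.symm w) h1 h2
  refine ⟨L.drawing Z M, L.drawing_racsim Z M hL hM hkey, ?_, ?_, ?_⟩
  · have h := L.drawing_grid Z M hL
    have hN : L.N = 3 * (n : ℤ) - 2 := by rw [← hcard]; rfl
    rwa [hN] at h
  · intro e _
    exact le_refl 3
  · intro e _
    exact le_refl 2
end

section
/- Let Z be a maximal outerpath on vertices v₁,…,vₙ with n ≥ 4, labeled so that its two vertices of degree 2 are v₁ and v_j for some j with 2 < j < n. Then the spanning subgraph of Z obtained by deleting the edges of the upper path v₁→v₂→⋯→v_j and of the lower path v_{j+1}→v_{j+2}→⋯→vₙ is a caterpillar that spans all of v₁,…,vₙ, and consecutive spine vertices of this caterpillar alternate between the vertex set {v₁,…,v_j} of the upper path and the vertex set {v_{j+1},…,vₙ} of the lower path. -/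
open SimpleGraph

/-- A graph is a (possibly empty) path: either it has no vertices, or it is
connected, has maximum degree at most 2, and has a vertex of degree at most 1
(which rules out cycles). -/
def IsPathOrEmptyGraph {W : Type} (H : SimpleGraph W) : Prop :=
  IsEmpty W ∨ (H.Connected ∧ (∀ v : W, vdeg H v ≤ 2) ∧ ∃ v : W, vdeg H v ≤ 1)

/-- A caterpillar: a tree in which deleting all leaves (vertices of degree 1)
yields a (possibly empty) path, called the spine. -/
def IsCaterpillar {V : Type} (G : SimpleGraph V) : Prop :=
  G.IsTree ∧ IsPathOrEmptyGraph (G.induce {v : V | vdeg G v ≠ 1})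

/-- Two edges of a maximal outerpath never interleave. -/
lemma mo_nc {n : ℕ} {H : SimpleGraph (Fin n)} (hH : IsMaximalOuterpath H)
    {a b c d : Fin n} (h1 : a.val < b.val) (h2 : b.val < c.val) (h3 : c.val < d.val)
    (hac : H.Adj a c) (hbd : H.Adj b d) : False := by
  obtain ⟨-, -, hc, -⟩ := hH
  have ha := a.isLt
  have hb := b.isLt
  have hc' := c.isLt
  have hd := d.isLt
  have ncy : ∀ x y : Fin n, x.val + 1 < y.val → (0 < x.val ∨ y.val + 1 < n) → ¬ CycAdj n x y := by
    intro x y hxy hor hcy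
    have hx := x.isLt
    have hy := y.isLt
    rcases hcy with h | h
    · rw [Nat.mod_eq_of_lt (by omega)] at h
      omega
    · by_cases hyn : y.val + 1 < n
      · rw [Nat.mod_eq_of_lt hyn] at h
        omega
      · have : y.val + 1 = n := by omega
        rw [this, Nat.mod_self] at h
        omega
  have rp : ∀ x y : Fin n, x.val ≤ y.val → RelPos n x y = y.val - x.val := by
    intro x y hxy
    have hy := y.isLt
    unfold RelPos
    rw [show y.val + n - x.val = (y.val - x.val) + n by omega, Nat.add_mod_right,
      Nat.mod_eq_of_lt (by omega)]
  refine hc a c b d hac hbd (ncy _ _ (by omega) (by omega)) (ncy _ _ (by omega) (by omega))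
    ?_ ?_ ?_ ?_ ?_
  · intro h; subst h; omega
  · intro h; subst h; omega
  · intro h; subst h; omega
  · intro h; subst h; omega
  · left
    unfold CyclicBtw
    rw [rp a b (by omega), rp a c (by omega), rp a d (by omega)]
    omega

/-- Consecutive vertices are adjacent. -/
lemma mo_succ {n : ℕ} {H : SimpleGraph (Fin n)} (hH : IsMaximalOuterpath H)
    {a b : Fin n} (h : b.val = a.val + 1) : H.Adj a b := by
  refine hH.1 a b ?_ (Or.inl ?_)
  · intro h'; subst h'; omega
  · have := b.isLt
    rw [Nat.mod_eq_of_lt (by omega)]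
    exact h

/-- Strictly below any chord there is a vertex of degree two. -/
lemma mo_ear {n : ℕ} {H : SimpleGraph (Fin n)} (hH : IsMaximalOuterpath H) :
    ∀ m : ℕ, ∀ a b : Fin n, b.val - a.val = m → a.val + 2 ≤ b.val → H.Adj a b →
      ∃ x : Fin n, a.val < x.val ∧ x.val < b.val ∧ vdeg H x = 2 := by
  intro m
  induction m using Nat.strong_induction_on with
  | _ m ih =>
    intro a b hm hab hadj
    have hb := b.isLt
    let x : Fin n := ⟨a.val + 1, by omega⟩
    let z : Fin n := ⟨a.val + 2, by omega⟩
    have hx : x.val = a.val + 1 := rfl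
    have hz : z.val = a.val + 2 := rfl
    by_cases hex : ∃ y : Fin n, H.Adj x y ∧ y ≠ a ∧ y ≠ z
    · obtain ⟨y, hxy, hya, hyz⟩ := hex
      have hya' : y.val ≠ a.val := fun h => hya (Fin.ext h)
      have hyz' : y.val ≠ z.val := fun h => hyz (Fin.ext h)
      have hyx' : y.val ≠ x.val := fun h => hxy.ne (Fin.ext h.symm)
      by_cases h1 : y.val < a.val
      · exact (mo_nc hH (a := y) (b := a) (c := x) (d := b) h1 (by omega) (by omega)
          hxy.symm hadj).elim
      by_cases h2 : b.val < y.val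
      · exact (mo_nc hH (a := a) (b := x) (c := b) (d := y) (by omega) (by omega) h2
          hadj hxy).elim
      obtain ⟨w, hw1, hw2, hw3⟩ := ih (y.val - x.val) (by omega) x y rfl (by omega) hxy
      exact ⟨w, by omega, by omega, hw3⟩
    · push Not at hex
      refine ⟨x, by omega, by omega, ?_⟩
      unfold vdeg
      rw [Set.ncard_eq_two]
      refine ⟨a, z, ?_, ?_⟩
      · intro h
        have := congrArg Fin.val h
        omega
      · ext y
        simp only [SimpleGraph.mem_neighborSet, Set.mem_insert_iff, Set.mem_singleton_iff]
        constructor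
        · intro h
          by_cases hy : y = a
          · exact Or.inl hy
          · exact Or.inr (hex y h hy)
        · rintro (h | h)
          · subst h
            exact (mo_succ hH hx).symm
          · subst h
            exact mo_succ hH (by omega)

/-- A vertex with two distinct neighbours is not a leaf. -/
lemma vdeg_ne_one_of_two {V : Type} {G : SimpleGraph V} {v a b : V} (ha : G.Adj v a)
    (hb : G.Adj v b) (hab : a ≠ b) : vdeg G v ≠ 1 := by
  intro h
  unfold vdeg at h
  obtain ⟨x, hx⟩ := Set.ncard_eq_one.mp h
  have h1 : a ∈ G.neighborSet v := ha
  have h2 : b ∈ G.neighborSet v := hb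
  rw [hx] at h1 h2
  exact hab (h1.trans h2.symm)

/-- Paths between non-leaves avoid leaves. -/
lemma reach_nonleaf {V : Type} {G : SimpleGraph V} {a b : V} (w : G.Walk a b) :
    w.IsPath → ∀ (ha : vdeg G a ≠ 1) (hb : vdeg G b ≠ 1),
      (G.induce {v : V | vdeg G v ≠ 1}).Reachable ⟨a, ha⟩ ⟨b, hb⟩ := by
  induction w with
  | nil => intro _ _ _; exact Reachable.refl _
  | @cons a c b h p ih =>
    intro hp ha hb
    rw [Walk.cons_isPath_iff] at hp
    have hc : vdeg G c ≠ 1 := by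
      cases p with
      | nil => exact hb
      | @cons _ d _ h' p' =>
        refine vdeg_ne_one_of_two h.symm h' ?_
        rintro rfl
        apply hp.2
        simp
    have hadj : (G.induce {v : V | vdeg G v ≠ 1}).Adj ⟨a, ha⟩ ⟨c, hc⟩ := h
    exact hadj.reachable.trans (ih hp.1 hc hb)

/-- A finite tree has a vertex of degree at most one. -/
lemma tree_low {W : Type} [Finite W] {G : SimpleGraph W} (hG : G.IsTree) :
    ∃ v, vdeg G v ≤ 1 := by
  classical
  have : Fintype W := Fintype.ofFinite _
  rcases subsingleton_or_nontrivial W with hs | hn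
  · obtain ⟨v⟩ := hG.connected.nonempty
    refine ⟨v, ?_⟩
    unfold vdeg
    exact Set.ncard_le_one_of_subsingleton _
  · obtain ⟨v, hv⟩ := hG.exists_vert_degree_one_of_nontrivial
    refine ⟨v, ?_⟩
    rw [← hv]
    unfold vdeg
    rw [← SimpleGraph.card_neighborSet_eq_degree, ← Nat.card_eq_fintype_card,
      Nat.card_coe_set_eq]

/-- The non-leaves of a finite tree are empty, or form a connected graph with a vertex of
degree at most one. -/
lemma spine_tree {V : Type} [Finite V] {G : SimpleGraph V} (hG : G.IsTree) :
    IsEmpty {v : V | vdeg G v ≠ 1} ∨ ((G.induce {v : V | vdeg G v ≠ 1}).Connected ∧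
      ∃ v, vdeg (G.induce {v : V | vdeg G v ≠ 1}) v ≤ 1) := by
  classical
  rcases isEmpty_or_nonempty {v : V | vdeg G v ≠ 1} with he | hne
  · exact Or.inl he
  right
  have hconn : (G.induce {v : V | vdeg G v ≠ 1}).Connected := by
    refine ⟨?_⟩
    rintro ⟨a, ha⟩ ⟨b, hb⟩
    obtain ⟨w, hw⟩ := (hG.connected.preconnected a b).exists_isPath
    exact reach_nonleaf w hw ha hb
  refine ⟨hconn, ?_⟩
  have htree : (G.induce {v : V | vdeg G v ≠ 1}).IsTree := ⟨hconn, hG.isAcyclic.induce _⟩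
  exact tree_low htree

/-- The number of deleted edges is at most `n - 2`. -/
lemma deleted_card (n : ℕ) (k : Fin n) (hk2 : k.val + 2 ≤ n) :
    {e : Sym2 (Fin n) | ∃ a b : Fin n, e = s(a, b) ∧
      (b.val = a.val + 1 ∨ a.val = b.val + 1) ∧
      ((a.val ≤ k.val ∧ b.val ≤ k.val) ∨ (k.val < a.val ∧ k.val < b.val))}.ncard ≤ n - 2 := by
  have hcard : (((Finset.range (n - 1)).erase k.val : Finset ℕ) : Set ℕ).ncard = n - 2 := by
    rw [Set.ncard_coe_finset, Finset.card_erase_of_mem (by simp; omega)]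
    simp
    omega
  have key : ∀ e ∈ {e : Sym2 (Fin n) | ∃ a b : Fin n, e = s(a, b) ∧
      (b.val = a.val + 1 ∨ a.val = b.val + 1) ∧
      ((a.val ≤ k.val ∧ b.val ≤ k.val) ∨ (k.val < a.val ∧ k.val < b.val))},
      ∃ a b : Fin n, e = s(a, b) ∧ b.val = a.val + 1 ∧ a.val ≠ k.val := by
    rintro e ⟨a, b, rfl, h | h, h'⟩
    · exact ⟨a, b, rfl, h, by omega⟩
    · exact ⟨b, a, Sym2.eq_swap, h, by omega⟩
  have infv : ∀ a b : Fin n, b.val = a.val + 1 → (s(a, b) : Sym2 (Fin n)).inf = a := by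
    intro a b h
    rw [Sym2.inf_mk]
    exact inf_eq_left.mpr (Fin.le_def.mpr (by omega))
  rw [← hcard]
  refine Set.ncard_le_ncard_of_injOn (fun e => e.inf.val) ?_ ?_
  · intro e he
    obtain ⟨a, b, rfl, h, h'⟩ := key e he
    have := b.isLt
    simp only [infv a b h]
    simp
    omega
  · intro e he e' he' hee
    obtain ⟨a, b, rfl, h, -⟩ := key e he
    obtain ⟨c, d, rfl, h2, -⟩ := key e' he'
    simp only [infv a b h, infv c d h2] at hee
    have h1 : a = c := Fin.ext hee
    have h3 : b = d := Fin.ext (by omega)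
    rw [h1, h3]

/-- Let `H` be a maximal outerpath on `Fin n` (`n ≥ 4`), labeled so that its two
degree-2 vertices are the vertex `0` and a vertex `k` with `2 ≤ k ≤ n - 2`
(in 1-based notation: `v₁` and `v_j` with `2 < j < n`). Deleting the edges of the
upper path `0 → 1 → ⋯ → k` and of the lower path `(k+1) → (k+2) → ⋯ → (n-1)`
yields a spanning caterpillar whose consecutive spine vertices (adjacent non-leaf
vertices) alternate between the upper-path vertex set `{0, …, k}` and the
lower-path vertex set `{k+1, …, n-1}`. -/
theorem maximal_outerpath_spanning_caterpillar (n : ℕ) (hn : 4 ≤ n)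
    (H : SimpleGraph (Fin n)) (hH : IsMaximalOuterpath H) (k : Fin n)
    (hk1 : 2 ≤ k.val) (hk2 : k.val ≤ n - 2)
    (hdeg0 : ∀ v : Fin n, v.val = 0 → vdeg H v = 2) (hdegk : vdeg H k = 2)
    (C : SimpleGraph (Fin n))
    (hC : C = H.deleteEdges {e : Sym2 (Fin n) | ∃ a b : Fin n, e = s(a, b) ∧
      (b.val = a.val + 1 ∨ a.val = b.val + 1) ∧
      ((a.val ≤ k.val ∧ b.val ≤ k.val) ∨ (k.val < a.val ∧ k.val < b.val))}) :
    IsCaterpillar C ∧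
      ∀ a b : Fin n, C.Adj a b → vdeg C a ≠ 1 → vdeg C b ≠ 1 →
        (a.val ≤ k.val ↔ ¬(b.val ≤ k.val)) := by
  have hk2' : k.val + 2 ≤ n := by omega
  -- no third vertex of degree two
  have hthird : ∀ x : Fin n, vdeg H x = 2 → x.val = 0 ∨ x.val = k.val := by
    intro x hx
    by_contra hcon
    push Not at hcon
    have h2 : 2 < {v : Fin n | vdeg H v = 2}.ncard := by
      rw [Set.two_lt_ncard_iff]
      refine ⟨⟨0, by omega⟩, k, x, hdeg0 _ rfl, hdegk, hx, ?_, ?_, ?_⟩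
      · intro h
        have := congrArg Fin.val h
        simp at this
        omega
      · intro h
        have := congrArg Fin.val h
        simp at this
        omega
      · intro h
        subst h
        omega
    have := hH.2.2.2
    omega
  have hside : ∀ a b : Fin n, a.val < b.val → C.Adj a b → a.val ≤ k.val ∧ k.val < b.val := by
    intro a b hab h
    rw [hC, SimpleGraph.deleteEdges_adj] at h
    obtain ⟨hadj, hnot⟩ := h
    by_contra hcon
    by_cases hs : b.val = a.val + 1
    · exact hnot ⟨a, b, rfl, Or.inl hs, by omega⟩
    · obtain ⟨x, h1, h2, h3⟩ := mo_ear hH _ a b rfl (by omega) hadj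
      rcases hthird x h3 with h | h <;> omega
  have hCH : ∀ a b : Fin n, C.Adj a b → H.Adj a b := by
    intro a b h
    rw [hC, SimpleGraph.deleteEdges_adj] at h
    exact h.1
  have hbip : ∀ a b : Fin n, C.Adj a b → (a.val ≤ k.val ↔ ¬(b.val ≤ k.val)) := by
    intro a b h
    have hne : a.val ≠ b.val := fun h' => h.ne (Fin.ext h')
    rcases lt_or_gt_of_ne hne with h1 | h1
    · have := hside a b h1 h
      omega
    · have := hside b a h1 h.symm
      omega
  have hchain : ∀ a b c d : Fin n, C.Adj a b → C.Adj c d → (a.val ≤ k.val ↔ c.val ≤ k.val) →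
      a.val < c.val → d.val ≤ b.val := by
    intro a b c d hab hcd hac hlt
    by_contra hcon
    have h1 := hbip a b hab
    have h2 := hbip c d hcd
    by_cases ha : a.val ≤ k.val
    · exact mo_nc hH (a := a) (b := c) (c := b) (d := d) hlt (by omega) (by omega)
        (hCH _ _ hab) (hCH _ _ hcd)
    · exact mo_nc hH (a := b) (b := d) (c := a) (d := c) (by omega) (by omega) hlt
        (hCH _ _ hab).symm (hCH _ _ hcd).symm
  -- the ordered edge set
  let E : Set (Fin n × Fin n) := {p | C.Adj p.1 p.2 ∧ p.1.val ≤ k.val ∧ k.val < p.2.val}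
  let f : Fin n × Fin n → ℕ := fun p => p.1.val + (n - 1 - p.2.val)
  have hfE : ∀ p ∈ E, f p ∈ ((Finset.range (n - 1) : Finset ℕ) : Set ℕ) := by
    rintro ⟨a, b⟩ ⟨h1, h2, h3⟩
    have := b.isLt
    simp only [f, Finset.coe_range, Set.mem_Iio]
    simp only at h2 h3
    omega
  have hfinj : Set.InjOn f E := by
    rintro ⟨a, b⟩ ⟨h1, h2, h3⟩ ⟨c, d⟩ ⟨h4, h5, h6⟩ hf
    simp only [f] at hf h1 h2 h3 h4 h5 h6
    have hb := b.isLt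
    have hd := d.isLt
    have e1 : a.val = c.val := by
      rcases lt_trichotomy a.val c.val with h | h | h
      · have := hchain a b c d h1 h4 (by omega) h
        omega
      · exact h
      · have := hchain c d a b h4 h1 (by omega) h
        omega
    have e2 : b.val = d.val := by omega
    rw [Fin.ext e1, Fin.ext e2]
  have hEle : E.ncard ≤ n - 1 := by
    have := Set.ncard_le_ncard_of_injOn f hfE hfinj
    rwa [Set.ncard_coe_finset, Finset.card_range] at this
  have hCE : C.edgeSet.ncard ≤ E.ncard := by
    have hsub : C.edgeSet ⊆ (fun p : Fin n × Fin n => s(p.1, p.2)) '' E := by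
      intro e
      induction e using Sym2.ind with
      | _ a b =>
        intro he
        rw [SimpleGraph.mem_edgeSet] at he
        have hb := hbip a b he
        by_cases ha : a.val ≤ k.val
        · exact ⟨(a, b), ⟨he, ha, by simp only; omega⟩, rfl⟩
        · exact ⟨(b, a), ⟨he.symm, by simp only; omega, by simp only; omega⟩, Sym2.eq_swap⟩
    exact (Set.ncard_le_ncard hsub).trans Set.ncard_image_le
  have hCge : n - 1 ≤ C.edgeSet.ncard := by
    have h1 := deleted_card n k hk2'
    have h2 := hH.2.1
    rw [hC, SimpleGraph.edgeSet_deleteEdges]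
    have h3 := Set.ncard_le_ncard_sdiff_add_ncard H.edgeSet
      {e : Sym2 (Fin n) | ∃ a b : Fin n, e = s(a, b) ∧
      (b.val = a.val + 1 ∨ a.val = b.val + 1) ∧
      ((a.val ≤ k.val ∧ b.val ≤ k.val) ∨ (k.val < a.val ∧ k.val < b.val))}
    omega
  have hsurj : ∀ t, t < n - 1 → ∃ p ∈ E, f p = t := by
    intro t ht
    have himg : f '' E = ((Finset.range (n - 1) : Finset ℕ) : Set ℕ) := by
      refine Set.eq_of_subset_of_ncard_le ?_ ?_ (Finset.finite_toSet _)
      · rintro _ ⟨p, hp, rfl⟩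
        exact hfE p hp
      · rw [Set.ncard_coe_finset, Finset.card_range, hfinj.ncard_image]
        omega
    have : t ∈ f '' E := by
      rw [himg]
      simpa using ht
    exact this
  -- connectivity along the staircase
  have hstair : ∀ t : ℕ, ∀ a b : Fin n, C.Adj a b → a.val ≤ k.val → k.val < b.val →
      a.val + (n - 1 - b.val) = t →
      ∀ v : Fin n, (v.val ≤ a.val ∨ b.val ≤ v.val) → C.Reachable a v := by
    intro t
    induction t with
    | zero =>
      intro a b hab ha hb ht v hv
      have := v.isLt
      have := b.isLt
      rcases hv with hv | hv
      · have : v = a := Fin.ext (by omega)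
        rw [this]
      · have : v = b := Fin.ext (by omega)
        rw [this]
        exact hab.reachable
    | succ t ih =>
      intro a b hab ha hb ht v hv
      have hbn := b.isLt
      obtain ⟨⟨c, d⟩, ⟨hcd, hc, hd⟩, hf⟩ := hsurj t (by omega)
      simp only [f] at hcd hc hd hf
      have hdn := d.isLt
      have hle : c.val ≤ a.val := by
        by_contra hlt
        have := hchain a b c d hab hcd (by omega) (by omega)
        omega
      have hIH := ih c d hcd hc hd hf
      by_cases hva : v = a
      · rw [hva]
      by_cases hvb : v = b
      · rw [hvb]; exact hab.reachable
      have hva' : v.val ≠ a.val := fun h => hva (Fin.ext h)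
      have hvb' : v.val ≠ b.val := fun h => hvb (Fin.ext h)
      by_cases heq : c.val = a.val
      · have hca : c = a := Fin.ext heq
        rw [← hca]
        exact hIH v (by omega)
      · have h5 := hchain c d a b hcd hab (by omega) (by omega)
        have hdb : d = b := Fin.ext (by omega)
        have h6 : C.Reachable a c := hab.reachable.trans (by rw [← hdb]; exact hcd.symm.reachable)
        exact h6.trans (hIH v (by omega))
  have hconn : C.Connected := by
    obtain ⟨⟨a, b⟩, ⟨hab, ha, hb⟩, hf⟩ := hsurj (n - 2) (by omega)
    simp only [f] at hab ha hb hf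
    have hbn := b.isLt
    have hr : ∀ v, C.Reachable a v := fun v => hstair (n - 2) a b hab ha hb hf v (by omega)
    have : Nonempty (Fin n) := ⟨a⟩
    exact ⟨fun u v => (hr u).symm.trans (hr v)⟩
  have htree : C.IsTree := by
    rw [SimpleGraph.isTree_iff_connected_and_card]
    refine ⟨hconn, ?_⟩
    rw [Nat.card_coe_set_eq, Nat.card_fin]
    omega
  refine ⟨⟨htree, ?_⟩, fun a b h _ _ => hbip a b h⟩
  rcases spine_tree htree with he | ⟨h1, h2⟩
  · exact Or.inl he
  refine Or.inr ⟨h1, ?_, h2⟩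
  -- of three neighbours of a vertex, the middle one is a leaf
  have hmid : ∀ u x y z : Fin n, C.Adj u x → C.Adj u y → C.Adj u z → x.val < y.val →
      y.val < z.val → vdeg C y = 1 := by
    intro u x y z hx hy hz hxy hyz
    unfold vdeg
    rw [Set.ncard_eq_one]
    refine ⟨u, ?_⟩
    ext w
    simp only [SimpleGraph.mem_neighborSet, Set.mem_singleton_iff]
    constructor
    · intro hw
      have b1 := hbip u y hy
      have b2 := hbip y w hw
      rcases lt_trichotomy w.val u.val with h | h | h
      · have := hchain w y u z hw.symm hz (by omega) h
        omega
      · exact Fin.ext h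
      · have := hchain u x w y hx hw.symm (by omega) h
        omega
    · rintro rfl
      exact hy.symm
  rintro ⟨u, hu⟩
  by_contra hcon
  push Not at hcon
  unfold vdeg at hcon
  rw [Set.two_lt_ncard_iff] at hcon
  obtain ⟨⟨x, hx⟩, ⟨y, hy⟩, ⟨z, hz⟩, hux, huy, huz, hxy, hxz, hyz⟩ := hcon
  have hux' : C.Adj u x := hux
  have huy' : C.Adj u y := huy
  have huz' : C.Adj u z := huz
  have nxy : x.val ≠ y.val := fun h => hxy (Subtype.ext (Fin.ext h))
  have nxz : x.val ≠ z.val := fun h => hxz (Subtype.ext (Fin.ext h))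
  have nyz : y.val ≠ z.val := fun h => hyz (Subtype.ext (Fin.ext h))
  rcases lt_or_gt_of_ne nxy with h1 | h1 <;> rcases lt_or_gt_of_ne nxz with h2 | h2 <;>
    rcases lt_or_gt_of_ne nyz with h3 | h3
  · exact hy (hmid u x y z hux' huy' huz' h1 h3)
  · exact hz (hmid u x z y hux' huz' huy' h2 h3)
  · omega
  · exact hx (hmid u z x y huz' hux' huy' h2 h1)
  · exact hx (hmid u y x z huy' hux' huz' h1 h2)
  · omega
  · exact hz (hmid u y z x huy' huz' hux' h3 h2)
  · exact hy (hmid u z y x huz' huy' hux' h3 h1)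
end
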